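/- Let (A,Λ) be any associative form ring with 1, let n ≥ 3, and let (I,Γ), (J,Δ), (K,Θ) be form ideals of (A,Λ). Then [[EU(2n,I,Γ), EU(2n,J,Δ)], EU(2n,K,Θ)] = [EU(2n,(I,Γ)∘(J,Δ)), EU(2n,K,Θ)]. -/

import Mathlib

open Matrix
open scoped commutatorElement

/-- Bak's form ring data on a ring `A`: an involution `bar`, a central symmetry
`λ` with `λ λ̄ = 1`, and a form parameter `Λ`. -/
structure FormRingData (A : Type*) [Ring A] where
  bar : A →+ A
  bar_mul : ∀ a b : A, bar (a * b) = bar b * bar a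
  bar_bar : ∀ a : A, bar (bar a) = a
  lam : A
  lam_comm : ∀ a : A, lam * a = a * lam
  lam_bar : lam * bar lam = 1
  Lambda : AddSubgroup A
  lambdaMin_mem : ∀ c : A, c - lam * bar c ∈ Lambda
  lambdaMax_mem : ∀ x ∈ Lambda, x = -(lam * bar x)
  lambda_conj : ∀ (c : A), ∀ x ∈ Lambda, c * x * bar c ∈ Lambda

namespace FormRingData

variable {A : Type*} [Ring A]

/-- Integral powers of the symmetry `λ`; negative powers use `λ̄ = λ⁻¹`. -/
def lpow (D : FormRingData A) (k : ℤ) : A :=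
  if 0 ≤ k then D.lam ^ k.toNat else (D.bar D.lam) ^ (-k).toNat

end FormRingData

/-- The index set `Ω = {1,…,n,−n,…,−1}`, coded as `Fin n × Bool`
(second component `true` = positive index). -/
abbrev Idx (n : ℕ) := Fin n × Bool

namespace Idx

/-- The involution `i ↦ −i` on indices. -/
def neg {n : ℕ} (i : Idx n) : Idx n := (i.1, !i.2)

/-- The sign `ε(i) ∈ {±1}`. -/
def eps {n : ℕ} (i : Idx n) : ℤ := if i.2 then 1 else -1

theorem neg_ne {n : ℕ} (i : Idx n) : neg i ≠ i := by
  simp [neg, Prod.ext_iff]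

theorem neg_injective {n : ℕ} : Function.Injective (neg (n := n)) := by
  intro i j h
  simp only [neg, Prod.mk.injEq] at h
  refine Prod.ext h.1 ?_
  have h2 := h.2
  cases hi : i.2 <;> cases hj : j.2 <;> simp_all

theorem neg_neg {n : ℕ} (i : Idx n) : neg (neg i) = i := by
  simp [neg]

end Idx

/-- `GL(2n, A)`, realised as the units of the `Ω × Ω` matrix ring over `A`. -/
abbrev GLn (A : Type*) [Ring A] (n : ℕ) := (Matrix (Idx n) (Idx n) A)ˣ

section aux

theorem one_add_mul_one_sub {R : Type*} [Ring R] {X : R} (h : X * X = 0) :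
    (1 + X) * (1 - X) = 1 := by
  have hh : (1 + X) * (1 - X) = 1 - X * X := by noncomm_ring
  rw [hh, h, sub_zero]

theorem one_sub_mul_one_add {R : Type*} [Ring R] {X : R} (h : X * X = 0) :
    (1 - X) * (1 + X) = 1 := by
  have hh : (1 - X) * (1 + X) = 1 - X * X := by noncomm_ring
  rw [hh, h, sub_zero]

theorem stdBasisMatrix_neg' {A : Type*} [Ring A] {n : ℕ} (i j : Idx n) (c : A) :
    Matrix.single i j (-c) = -Matrix.single i j c := by
  refine eq_neg_of_add_eq_zero_left ?_
  rw [← Matrix.single_add]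
  simp

end aux

namespace FormRingData

variable {A : Type*} [Ring A] {n : ℕ}

/-- The off-diagonal part of a short root element. -/
def Xmat (D : FormRingData A) (i j : Idx n) (c : A) : Matrix (Idx n) (Idx n) A :=
  Matrix.single i j c -
    Matrix.single (Idx.neg j) (Idx.neg i) (D.lpow ((Idx.eps j - Idx.eps i) / 2) * D.bar c)

theorem Xmat_mul (D : FormRingData A) {i j : Idx n} (hij : i ≠ j) (c c' : A) :
    D.Xmat i j c * D.Xmat i j c' = 0 := by
  unfold Xmat
  rw [sub_mul, mul_sub, mul_sub,
    Matrix.single_mul_single_of_ne _ _ _ _ (Ne.symm hij),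
    Matrix.single_mul_single_of_ne _ _ _ _ (Ne.symm (Idx.neg_ne j)),
    Matrix.single_mul_single_of_ne _ _ _ _ (Idx.neg_ne i),
    Matrix.single_mul_single_of_ne _ _ _ _ (fun h => hij (Idx.neg_injective h))]
  simp

theorem Xmat_neg (D : FormRingData A) (i j : Idx n) (c : A) :
    D.Xmat i j (-c) = -D.Xmat i j c := by
  unfold Xmat
  rw [map_neg, mul_neg, stdBasisMatrix_neg', stdBasisMatrix_neg']
  abel

/-- The elementary short root unipotent `T_{ij}(c)`, for `i ≠ ±j`
(with junk value `1` when `i = j`). -/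
def TS (D : FormRingData A) (i j : Idx n) (c : A) : GLn A n :=
  if h : i = j then 1 else
    { val := 1 + D.Xmat i j c
      inv := 1 + D.Xmat i j (-c)
      val_inv := by
        rw [D.Xmat_neg, ← sub_eq_add_neg]
        exact one_add_mul_one_sub (D.Xmat_mul h c c)
      inv_val := by
        rw [D.Xmat_neg, ← sub_eq_add_neg]
        exact one_sub_mul_one_add (D.Xmat_mul h c c) }

/-- The elementary long root unipotent `T_{i,−i}(c)`. -/
def TL (D : FormRingData A) (i : Idx n) (c : A) : GLn A n where
  val := 1 + Matrix.single i (Idx.neg i) c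
  inv := 1 + Matrix.single i (Idx.neg i) (-c)
  val_inv := by
    rw [stdBasisMatrix_neg', ← sub_eq_add_neg]
    exact one_add_mul_one_sub (Matrix.single_mul_single_of_ne _ _ _ _ (Idx.neg_ne i) _)
  inv_val := by
    rw [stdBasisMatrix_neg', ← sub_eq_add_neg]
    exact one_sub_mul_one_add (Matrix.single_mul_single_of_ne _ _ _ _ (Idx.neg_ne i) _)

/-- The elementary unitary transvection `T_{ij}(c)` (long or short root type
according to whether `j = −i`). -/
def T (D : FormRingData A) (i j : Idx n) (c : A) : GLn A n :=
  if j = Idx.neg i then D.TL i c else D.TS i j c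

/-- The elementary commutator `Y_{ij}(a,b) = [T_{ij}(a), T_{ji}(b)]`. -/
def Y (D : FormRingData A) (i j : Idx n) (a b : A) : GLn A n :=
  ⁅D.T i j a, D.T j i b⁆

/-- The elementary conjugate `Z_{ij}(a,c) = T_{ji}(c) T_{ij}(a) T_{ji}(−c)`. -/
def Z (D : FormRingData A) (i j : Idx n) (a c : A) : GLn A n :=
  D.T j i c * D.T i j a * D.T j i (-c)

/-- The set of elementary unitary transvections of level `(I,Γ)`. -/
def transvGen (D : FormRingData A) (n : ℕ) (I Γ : AddSubgroup A) : Set (GLn A n) :=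
  {x | ∃ i j : Idx n, i ≠ j ∧ i ≠ Idx.neg j ∧ ∃ c ∈ I, x = D.TS i j c} ∪
    {x | ∃ i : Idx n, ∃ g ∈ Γ, x = D.TL i (D.lpow (-(Idx.eps i + 1) / 2) * g)}

/-- The unrelative elementary subgroup `FU(2n, I, Γ)`. -/
def FU (D : FormRingData A) (n : ℕ) (I Γ : AddSubgroup A) : Subgroup (GLn A n) :=
  Subgroup.closure (D.transvGen n I Γ)

/-- The absolute elementary unitary group `EU(2n, A, Λ)`. -/
def EUmax (D : FormRingData A) (n : ℕ) : Subgroup (GLn A n) :=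
  D.FU n ⊤ D.Lambda

/-- The relative elementary subgroup `EU(2n, I, Γ)`: the normal closure of
`FU(2n, I, Γ)` in `EU(2n, A, Λ)`. -/
def EU (D : FormRingData A) (n : ℕ) (I Γ : AddSubgroup A) : Subgroup (GLn A n) :=
  Subgroup.closure {x | ∃ g ∈ D.EUmax n, ∃ t ∈ D.transvGen n I Γ, x = g * t * g⁻¹}

/-- The additive subgroup generated by products `st`, `s ∈ S`, `t ∈ T`. -/
def mulSub (S T : AddSubgroup A) : AddSubgroup A :=
  AddSubgroup.closure {x | ∃ a ∈ S, ∃ b ∈ T, x = a * b}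

/-- The symmetrised product `ST + TS` of two (additive subgroups underlying)
two-sided ideals. -/
def symI (S T : AddSubgroup A) : AddSubgroup A :=
  mulSub S T ⊔ mulSub T S

/-- The minimal relative form parameter `Γ_min(K)` of level `K`. -/
def gammaMin (D : FormRingData A) (K : AddSubgroup A) : AddSubgroup A :=
  AddSubgroup.closure
    ({x | ∃ a ∈ K, x = a - D.lam * D.bar a} ∪
      {x | ∃ a ∈ K, ∃ c ∈ D.Lambda, x = a * c * D.bar a})

/-- The relative form parameter `ˢΓ = ⟨ b γ b̄ ∣ b ∈ S, γ ∈ Γ ⟩`. -/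
def conjPar (D : FormRingData A) (S Γ : AddSubgroup A) : AddSubgroup A :=
  AddSubgroup.closure {x | ∃ b ∈ S, ∃ g ∈ Γ, x = b * g * D.bar b}

/-- The relative form parameter of the symmetrised product
`(I,Γ)∘(J,Δ) = (IJ+JI, Γ_min(IJ+JI) + ᴶΓ + ᴵΔ)`. -/
def symG (D : FormRingData A) (I Γ J Δ : AddSubgroup A) : AddSubgroup A :=
  D.gammaMin (symI I J) ⊔ D.conjPar J Γ ⊔ D.conjPar I Δ

/-- The elementary subgroup `EU(2n, (I,Γ)∘(J,Δ))` of the symmetrised product. -/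
def EUsym (D : FormRingData A) (n : ℕ) (I Γ J Δ : AddSubgroup A) : Subgroup (GLn A n) :=
  D.EU n (symI I J) (D.symG I Γ J Δ)

/-- Position-dependent membership `a ∈ (I,Γ)` at position `(i,j)`:
`a ∈ I` for a short root position, `a ∈ λ^{−(ε(i)+1)/2}Γ` for a long one. -/
def pmem (D : FormRingData A) (I Γ : AddSubgroup A) {n : ℕ} (i j : Idx n) (a : A) : Prop :=
  if j = Idx.neg i then ∃ g ∈ Γ, a = D.lpow (-(Idx.eps i + 1) / 2) * g else a ∈ I

end FormRingData

/-- A form ideal `(I,Γ)` of the form ring `(A,Λ)`. -/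
structure FormIdeal {A : Type*} [Ring A] (D : FormRingData A) where
  I : AddSubgroup A
  Gamma : AddSubgroup A
  mul_mem_left : ∀ (c : A), ∀ x ∈ I, c * x ∈ I
  mul_mem_right : ∀ (c : A), ∀ x ∈ I, x * c ∈ I
  bar_mem : ∀ x ∈ I, D.bar x ∈ I
  gammaMin_le : D.gammaMin I ≤ Gamma
  gamma_le_I : Gamma ≤ I
  gamma_le_Lambda : Gamma ≤ D.Lambda
  gamma_conj : ∀ (c : A), ∀ x ∈ Gamma, c * x * D.bar c ∈ Gamma


set_option linter.unusedSectionVars false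

section AbstractRG

variable {G : Type*} [Group G] {V : Type*} [AddCommGroup V]

def GenS (X : V → Subgroup G) (S : Set V) : Subgroup G := ⨆ v ∈ S, X v

theorem le_GenS {X : V → Subgroup G} {S : Set V} {v : V} (hv : v ∈ S) : X v ≤ GenS X S :=
  le_iSup₂_of_le v hv le_rfl

theorem GenS_le {X : V → Subgroup G} {S : Set V} {H : Subgroup G} (h : ∀ v ∈ S, X v ≤ H) :
    GenS X S ≤ H := iSup₂_le h

theorem GenS_mono {X : V → Subgroup G} {S T : Set V} (h : S ⊆ T) : GenS X S ≤ GenS X T :=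
  GenS_le fun _ hv => le_GenS (h hv)

def NN (Φ : Set V) (α β : V) : Set V :=
  {v | v ∈ Φ ∧ ∃ m k : ℤ, 0 < m ∧ 0 < k ∧ v = m • α + k • β}

def Cone (Φ : Set V) (γ β : V) : Set V :=
  {v | v ∈ Φ ∧ ∃ i j : ℤ, 0 < i ∧ v = i • γ + j • β}

def ConeP (Φ : Set V) (γ β : V) : Set V :=
  {v | v ∈ Φ ∧ ∃ i j : ℤ, 0 ≤ i ∧ v = i • γ + j • β}

def CommRel (Φ : Set V) (X Y W : V → Subgroup G) : Prop :=
  ∀ α ∈ Φ, ∀ β ∈ Φ, α + β ≠ 0 → ∀ x ∈ X α, ∀ y ∈ Y β, ⁅x, y⁆ ∈ GenS W (NN Φ α β)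

theorem cm_iff {L : Subgroup G} [L.Normal] {x y : G} :
    ⁅x, y⁆ ∈ L ↔ Commute (x : G ⧸ L) (y : G ⧸ L) := by
  rw [← QuotientGroup.eq_one_iff, ← commutatorElement_eq_one_iff_commute]
  rfl

/-- the subgroup of elements commuting with `y` modulo `L` -/
def CM (L : Subgroup G) [L.Normal] (y : G) : Subgroup G where
  carrier := {x | ⁅x, y⁆ ∈ L}
  mul_mem' := by
    intro a b ha hb
    simp only [Set.mem_ofPred_eq, cm_iff] at *
    exact ha.mul_left hb
  one_mem' := by simp [commutatorElement_def]
  inv_mem' := by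
    intro a ha
    simp only [Set.mem_ofPred_eq, cm_iff] at *
    exact ha.inv_left

theorem mem_CM {L : Subgroup G} [L.Normal] {x y : G} : x ∈ CM L y ↔ ⁅x, y⁆ ∈ L := Iff.rfl

theorem cm_symm {L : Subgroup G} {x y : G} (h : ⁅x, y⁆ ∈ L) : ⁅y, x⁆ ∈ L := by
  rw [← commutatorElement_inv]; exact L.inv_mem h

theorem cm_left {L : Subgroup G} [L.Normal] {y : G} {X : V → Subgroup G}
    {S : Set V} (h : ∀ v ∈ S, ∀ x ∈ X v, ⁅x, y⁆ ∈ L) {x : G} (hx : x ∈ GenS X S) :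
    ⁅x, y⁆ ∈ L :=
  (GenS_le (H := CM L y) fun v hv x hx => h v hv x hx) hx

theorem cm_both {L : Subgroup G} [L.Normal] {X Y : V → Subgroup G}
    {S T : Set V} (h : ∀ v ∈ S, ∀ x ∈ X v, ∀ u ∈ T, ∀ y ∈ Y u, ⁅x, y⁆ ∈ L)
    {x y : G} (hx : x ∈ GenS X S) (hy : y ∈ GenS Y T) : ⁅x, y⁆ ∈ L := by
  refine cm_left (fun v hv x hx => cm_symm ?_) hx
  exact cm_left (fun u hu y hy => cm_symm (h v hv x hx u hu y hy)) hy

/-- normalisation by conjugation extends to closures -/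
theorem conj_GenS {X : V → Subgroup G} {S : Set V} {H : Subgroup G} {g : G}
    (h : ∀ v ∈ S, ∀ x ∈ X v, g * x * g⁻¹ ∈ H) {x : G} (hx : x ∈ GenS X S) :
    g * x * g⁻¹ ∈ H := by
  have : GenS X S ≤ H.comap (MulAut.conj g).toMonoidHom :=
    GenS_le fun v hv x hx => h v hv x hx
  exact this hx

section cone
variable {Φ : Set V} {γ β : V} {XA XJ : V → Subgroup G}
  (hind : ∀ i j : ℤ, 0 < i → i • γ + j • β ≠ 0)
include hind

theorem cone_add_ne {u v : V} (hu : u ∈ ConeP Φ γ β) (hv : v ∈ Cone Φ γ β) : u + v ≠ 0 := by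
  obtain ⟨-, i, j, hi, rfl⟩ := hu
  obtain ⟨-, i', j', hi', rfl⟩ := hv
  have := hind (i + i') (j + j') (by omega)
  intro h; apply this; rw [← h]; module

omit hind in
theorem NN_sub_cone {u v : V} (hu : u ∈ ConeP Φ γ β) (hv : v ∈ Cone Φ γ β) :
    NN Φ u v ⊆ Cone Φ γ β := by
  obtain ⟨-, i, j, hi, rfl⟩ := hu
  obtain ⟨-, i', j', hi', rfl⟩ := hv
  rintro w ⟨hw, m, k, hm, hk, rfl⟩
  exact ⟨hw, m * i + k * i', m * j + k * j', by positivity, by module⟩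

theorem cone_conj (hc : CommRel Φ XA XJ XJ) {v : V} (hv : v ∈ ConeP Φ γ β) {g : G}
    (hg : g ∈ XA v) {m : G} (hm : m ∈ GenS XJ (Cone Φ γ β)) :
    g * m * g⁻¹ ∈ GenS XJ (Cone Φ γ β) := by
  refine conj_GenS (fun u hu x hx => ?_) hm
  have h1 : ⁅g, x⁆ ∈ GenS XJ (Cone Φ γ β) :=
    GenS_mono (NN_sub_cone hv hu) (hc v hv.1 u hu.1 (cone_add_ne hind hv hu) g hg x hx)
  have : g * x * g⁻¹ = ⁅g, x⁆ * x := by simp [commutatorElement_def]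
  rw [this]
  exact mul_mem h1 (le_GenS hu hx)

theorem cone_conj_gen (hc : CommRel Φ XA XJ XJ) {g : G}
    (hg : g ∈ GenS XA (ConeP Φ γ β)) {m : G} (hm : m ∈ GenS XJ (Cone Φ γ β)) :
    g * m * g⁻¹ ∈ GenS XJ (Cone Φ γ β) := by
  revert m
  have key : GenS XA (ConeP Φ γ β) ≤ Subgroup.normalizer (GenS XJ (Cone Φ γ β)) := by
    refine GenS_le fun v hv g hg => ?_
    rw [Subgroup.mem_normalizer_iff]
    intro h
    refine ⟨fun hh => cone_conj hind hc hv hg hh, fun hh => ?_⟩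
    have := cone_conj hind hc hv (inv_mem hg) hh
    simpa [mul_assoc] using this
  intro m hm
  exact ((Subgroup.mem_normalizer_iff.1 (key hg)) m).1 hm

omit hind in
theorem cone_sub : Cone Φ γ β ⊆ ConeP Φ γ β := fun _ ⟨h, i, j, hi, e⟩ => ⟨h, i, j, hi.le, e⟩

theorem cone_comm (hc : CommRel Φ XA XJ XJ) {w : G} (hw : w ∈ GenS XA (Cone Φ γ β))
    {u : V} (hu : u ∈ ConeP Φ γ β) {y : G} (hy : y ∈ XJ u) :
    ⁅w, y⁆ ∈ GenS XJ (Cone Φ γ β) := by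
  -- induct
  have ind : ∀ w ∈ GenS XA (Cone Φ γ β), ⁅w, y⁆ ∈ GenS XJ (Cone Φ γ β) := by
    intro w hw
    have hnorm : ∀ w ∈ GenS XA (Cone Φ γ β), ∀ m ∈ GenS XJ (Cone Φ γ β),
        w * m * w⁻¹ ∈ GenS XJ (Cone Φ γ β) := fun w hw m hm =>
      cone_conj_gen hind hc (GenS_mono cone_sub hw) hm
    let H : Subgroup G :=
      { carrier := {w | w ∈ GenS XA (Cone Φ γ β) ∧ ⁅w, y⁆ ∈ GenS XJ (Cone Φ γ β)}
        mul_mem' := by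
          rintro a b ⟨ha, ha'⟩ ⟨hb, hb'⟩
          refine ⟨mul_mem ha hb, ?_⟩
          have : ⁅a * b, y⁆ = a * ⁅b, y⁆ * a⁻¹ * ⁅a, y⁆ := by
            simp [commutatorElement_def, mul_assoc]
          rw [this]
          exact mul_mem (hnorm a ha _ hb') ha'
        one_mem' := ⟨one_mem _, by simp [commutatorElement_def]⟩
        inv_mem' := by
          rintro a ⟨ha, ha'⟩
          refine ⟨inv_mem ha, ?_⟩
          have : ⁅a⁻¹, y⁆ = a⁻¹ * ⁅a, y⁆⁻¹ * a⁻¹⁻¹ := by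
            simp [commutatorElement_def, mul_assoc]
          rw [this]
          exact hnorm _ (inv_mem ha) _ (inv_mem ha') }
    have : GenS XA (Cone Φ γ β) ≤ H := by
      refine GenS_le fun v hv x hx => ⟨le_GenS hv hx, ?_⟩
      have := hc v hv.1 u hu.1 (by rw [add_comm]; exact cone_add_ne hind hu hv) x hx y hy
      refine GenS_mono ?_ this
      intro w hw
      refine NN_sub_cone hu hv ?_
      obtain ⟨h, m, k, hm, hk, rfl⟩ := hw
      exact ⟨h, k, m, hk, hm, by module⟩
    exact (this hw).2
  exact ind w hw

end cone

end AbstractRG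

set_option linter.unusedSectionVars false
set_option linter.unusedSimpArgs false
section AbstractRG2

variable {G : Type*} [Group G] {V : Type*} [AddCommGroup V]

def Oth (Φ : Set V) (β : V) : Set V := {ν | ν ∈ Φ ∧ ν ≠ β ∧ ν ≠ -β}

def GenPr (Φ : Set V) (X : V → Subgroup G) (β ε : V) (x0 : G) : Prop :=
  ∀ y ∈ X β, ∃ e ∈ X ε, ∃ r ∈ GenS X (Oth Φ β), y = x0 * e * x0⁻¹ * r

structure RGH (Φ : Set V) (XA XI XJ : V → Subgroup G) (L : Subgroup G) : Prop where
  neg : ∀ v ∈ Φ, -v ∈ Φ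
  ind : ∀ β ∈ Φ, ∀ γ ∈ Φ, γ ≠ β → γ ≠ -β → ∀ i j : ℤ, 0 < i → i • γ + j • β ≠ 0
  AA : CommRel Φ XA XA XA
  AI : CommRel Φ XA XI XI
  AJ : CommRel Φ XA XJ XJ
  leI : ∀ v, XI v ≤ XA v
  IJ : ∀ α ∈ Φ, ∀ β ∈ Φ, α + β ≠ 0 → ∀ x ∈ XI α, ∀ y ∈ XJ β, ⁅x, y⁆ ∈ L
  abel : ∀ v ∈ Φ, ∀ x ∈ XA v, ∀ y ∈ XA v, Commute x y
  top : GenS XA Φ = ⊤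
  gen : ∀ β ∈ Φ, ∃ δ ∈ Oth Φ β, ∃ ε ∈ Oth Φ β, ∃ x0 ∈ XA δ,
    GenPr Φ XA β ε x0 ∧ GenPr Φ XI β ε x0 ∧ GenPr Φ XJ β ε x0 ∧
    ∀ σ ∈ Cone Φ ε β, ∀ w ∈ GenS XA (Cone Φ δ β),
      ∃ γ₁ ∈ Oth Φ σ, ∃ γ₂ ∈ Oth Φ σ, ∃ x₁ ∈ XA γ₁, ∃ x₂ ∈ XA γ₂, ∃ x₃ ∈ XA (-σ),
        w = x₁ * x₂ * x₃

def Ytil (Φ : Set V) (XI XJ : V → Subgroup G) (L : Subgroup G) : Subgroup G :=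
  Subgroup.closure ((L : Set G) ∪ {t | ∃ β ∈ Φ, ∃ x ∈ XI β, ∃ y ∈ XJ (-β), t = ⁅x, y⁆})

def Qp (Φ : Set V) (XA XJ : V → Subgroup G) : Subgroup G :=
  Subgroup.closure {z | ∃ β ∈ Φ, ∃ c ∈ XA (-β), ∃ b ∈ XJ β, z = c * b * c⁻¹}

theorem mem_cone_self {Φ : Set V} {γ β : V} (h : γ ∈ Φ) : γ ∈ Cone Φ γ β :=
  ⟨h, 1, 0, by norm_num, by module⟩

theorem mem_coneP_right {Φ : Set V} {γ β : V} (h : β ∈ Φ) : β ∈ ConeP Φ γ β :=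
  ⟨h, 0, 1, by norm_num, by module⟩

theorem mem_coneP_neg {Φ : Set V} {γ β : V} (h : -β ∈ Φ) : -β ∈ ConeP Φ γ β :=
  ⟨h, 0, -1, by norm_num, by module⟩

theorem cone_subset {Φ : Set V} {γ β : V} : Cone Φ γ β ⊆ Φ := fun _ h => h.1

theorem NN_subset {Φ : Set V} {γ β : V} : NN Φ γ β ⊆ Φ := fun _ h => h.1

theorem comm_conj_aux {Q : Type*} [Group Q] {x y f f' : Q} (h1 : Commute f y)
    (h2 : Commute f f') (h3 : Commute x f') : ⁅x * f, y * f'⁆ = ⁅x, y⁆ := by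
  have h4 : f * (y * f') * f⁻¹ = y * f' := by
    rw [(h1.mul_right h2).eq]; simp
  have h5 : f' * x⁻¹ * f'⁻¹ = x⁻¹ := by
    rw [← (h3.inv_left).eq]; simp
  calc ⁅x * f, y * f'⁆ = x * (f * (y * f') * f⁻¹) * x⁻¹ * f'⁻¹ * y⁻¹ := by
        simp [commutatorElement_def, mul_assoc]
    _ = x * y * (f' * x⁻¹ * f'⁻¹) * y⁻¹ := by rw [h4]; simp [mul_assoc]
    _ = ⁅x, y⁆ := by rw [h5, commutatorElement_def]

namespace RGH

variable {Φ : Set V} {XA XI XJ : V → Subgroup G} {L : Subgroup G}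
  (H : RGH Φ XA XI XJ L)

include H

theorem ind' {β γ : V} (hβ : β ∈ Φ) (hγ : γ ∈ Oth Φ β) :
    ∀ i j : ℤ, 0 < i → i • γ + j • β ≠ 0 := H.ind β hβ γ hγ.1 hγ.2.1 hγ.2.2

theorem gen_top {β : V} (hβ : β ∈ Φ) : GenS XA (Oth Φ β) = ⊤ := by
  rw [eq_top_iff, ← H.top]
  refine GenS_le fun v hv => ?_
  by_cases h1 : v = β
  · subst h1
    obtain ⟨δ, hδ, ε, hε, x0, hx0, h, -⟩ := H.gen v hv
    intro y hy
    obtain ⟨e, he, r, hr, rfl⟩ := h y hy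
    have h0 := le_GenS hδ hx0
    exact mul_mem (mul_mem (mul_mem h0 (le_GenS hε he)) (inv_mem h0)) hr
  by_cases h2 : v = -β
  · have e : Oth Φ β = Oth Φ v := by
      subst h2; ext w; simp only [Oth, Set.mem_ofPred_eq, neg_neg]; tauto
    rw [e]
    obtain ⟨δ, hδ, ε, hε, x0, hx0, h, -⟩ := H.gen v hv
    intro y hy
    obtain ⟨e, he, r, hr, rfl⟩ := h y hy
    have h0 := le_GenS hδ hx0
    exact mul_mem (mul_mem (mul_mem h0 (le_GenS hε he)) (inv_mem h0)) hr
  · exact le_GenS ⟨hv, h1, h2⟩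

theorem ycentral [L.Normal] {β : V} (hβ : β ∈ Φ) {x y : G} (hx : x ∈ XI β) (hy : y ∈ XJ (-β))
    (g : G) : ⁅g, ⁅x, y⁆⁆ ∈ L := by
  have key : GenS XA (Oth Φ β) ≤ CM L ⁅x, y⁆ := by
    refine GenS_le fun γ hγ g hg => ?_
    have hi := H.ind' hβ hγ
    have hgc : g ∈ GenS XA (Cone Φ γ β) := le_GenS (mem_cone_self hγ.1) hg
    have hβ' := H.neg β hβ
    have hf : ⁅x⁻¹, g⁆ ∈ GenS XI (Cone Φ γ β) :=
      cm_symm (cone_comm hi H.AI hgc (mem_coneP_right hβ) (inv_mem hx))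
    have hf' : ⁅y⁻¹, g⁆ ∈ GenS XJ (Cone Φ γ β) :=
      cm_symm (cone_comm hi H.AJ hgc (mem_coneP_neg hβ') (inv_mem hy))
    have c1 : ⁅⁅x⁻¹, g⁆, y⁆ ∈ L := by
      refine cm_left (fun v hv x hx => H.IJ v hv.1 _ hβ' ?_ x hx y hy) hf
      rw [add_comm]; exact cone_add_ne hi (mem_coneP_neg hβ') hv
    have c2 : ⁅⁅x⁻¹, g⁆, ⁅y⁻¹, g⁆⁆ ∈ L := by
      refine cm_both (fun v hv x hx u hu y hy => H.IJ v hv.1 _ hu.1 ?_ x hx y hy) hf hf'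
      exact cone_add_ne hi (cone_sub hv) hu
    have c3 : ⁅x, ⁅y⁻¹, g⁆⁆ ∈ L := by
      refine cm_symm (cm_left (fun v hv z hz => cm_symm (H.IJ β hβ v hv.1 ?_ x hx z hz)) hf')
      exact cone_add_ne hi (mem_coneP_right hβ) hv
    rw [cm_iff] at c1 c2 c3
    have := comm_conj_aux c1 c2 c3
    rw [mem_CM, cm_iff]
    have e1 : x * ⁅x⁻¹, g⁆ = g * x * g⁻¹ := by simp [commutatorElement_def, mul_assoc]
    have e2 : y * ⁅y⁻¹, g⁆ = g * y * g⁻¹ := by simp [commutatorElement_def, mul_assoc]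
    rw [← QuotientGroup.mk_mul, ← QuotientGroup.mk_mul, e1, e2] at this
    have e3 : ((g * ⁅x, y⁆ * g⁻¹ : G) : G ⧸ L) = ((⁅x, y⁆ : G) : G ⧸ L) := by
      have e4 : g * ⁅x, y⁆ * g⁻¹ = ⁅g * x * g⁻¹, g * y * g⁻¹⁆ := by
        simp [commutatorElement_def, mul_assoc]
      rw [e4]; exact this
    rw [QuotientGroup.mk_mul, QuotientGroup.mk_mul, QuotientGroup.mk_inv,
      mul_inv_eq_iff_eq_mul] at e3
    exact e3
  rw [H.gen_top hβ] at key
  exact key (Subgroup.mem_top g)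

theorem L_le_Ytil : L ≤ Ytil Φ XI XJ L := fun _ hx => Subgroup.subset_closure (Or.inl hx)

theorem Ytil_central [L.Normal] {t : G} (ht : t ∈ Ytil Φ XI XJ L) (g : G) : ⁅g, t⁆ ∈ L := by
  have : Ytil Φ XI XJ L ≤ CM L g := by
    refine (Subgroup.closure_le _).2 ?_
    rintro t (ht | ⟨β, hβ, x, hx, y, hy, rfl⟩)
    · refine cm_symm ?_
      rw [commutatorElement_def]
      exact mul_mem (Subgroup.Normal.conj_mem inferInstance t ht g) (inv_mem ht)
    · exact mem_CM.2 (cm_symm (H.ycentral hβ hx hy g))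
  exact cm_symm (this ht)

theorem Ytil_normal [L.Normal] : (Ytil Φ XI XJ L).Normal := by
  refine ⟨fun t ht g => ?_⟩
  have : g * t * g⁻¹ = ⁅g, t⁆ * t := by simp [commutatorElement_def]
  rw [this]
  exact mul_mem (H.L_le_Ytil (H.Ytil_central ht g)) ht

theorem FF [L.Normal] {x y : G} (hx : x ∈ GenS XI Φ) (hy : y ∈ GenS XJ Φ) :
    ⁅x, y⁆ ∈ Ytil Φ XI XJ L := by
  have := H.Ytil_normal
  refine cm_both (fun v hv x hx u hu y hy => ?_) hx hy
  by_cases h : v + u = 0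
  · obtain rfl : u = -v := (neg_eq_of_add_eq_zero_right h).symm
    exact Subgroup.subset_closure (Or.inr ⟨v, hv, x, hx, y, hy, rfl⟩)
  · exact H.L_le_Ytil (H.IJ v hv u hu h x hx y hy)

theorem FJ_le : GenS XJ Φ ≤ Qp Φ XA XJ :=
  GenS_le fun v hv x hx => Subgroup.subset_closure ⟨v, hv, 1, one_mem _, x, hx, by simp⟩

theorem conjF {γ : V} (hγ : γ ∈ Φ) {g m : G} (hg : g ∈ XA γ) (hm : m ∈ GenS XJ Φ) :
    g * m * g⁻¹ ∈ Qp Φ XA XJ := by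
  refine conj_GenS (fun ν hν b hb => ?_) hm
  by_cases h : γ + ν = 0
  · obtain rfl : γ = -ν := (neg_eq_of_add_eq_zero_left h).symm
    exact Subgroup.subset_closure ⟨ν, hν, g, hg, b, hb, rfl⟩
  · have : g * b * g⁻¹ = ⁅g, b⁆ * b := by simp [commutatorElement_def]
    rw [this]
    exact H.FJ_le (mul_mem (GenS_mono NN_subset (H.AJ γ hγ ν hν h g hg b hb)) (le_GenS hν hb))

theorem commZ {γ β : V} (hβ : β ∈ Φ) (hγ : γ ∈ Oth Φ β) {g c b : G}
    (hg : g ∈ GenS XA (Cone Φ γ β)) (hc : c ∈ XA (-β)) (hb : b ∈ XJ β) :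
    ⁅g, c * b * c⁻¹⁆ ∈ GenS XJ (Cone Φ γ β) := by
  have hi := H.ind' hβ hγ
  have hm := mem_coneP_neg (γ := γ) (H.neg β hβ)
  have h1 := cone_conj hi H.AA hm (inv_mem hc) hg
  have h2 := cone_comm hi H.AJ h1 (mem_coneP_right hβ) hb
  have h3 := cone_conj hi H.AJ hm hc h2
  have : ⁅g, c * b * c⁻¹⁆ = c * ⁅c⁻¹ * g * c⁻¹⁻¹, b⁆ * c⁻¹ := by
    simp [commutatorElement_def, mul_assoc]
  rw [this]; exact h3

theorem conjB {β : V} (hβ : β ∈ Φ) {d c b : G} (hd : d ∈ XA β) (hc : c ∈ XA (-β))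
    (hb : b ∈ XJ β) : d * (c * b * c⁻¹) * d⁻¹ ∈ Qp Φ XA XJ := by
  obtain ⟨δ, hδ, ε, hε, x0, hx0, -, -, h, hst⟩ := H.gen β hβ
  obtain ⟨e, he, r, hr, rfl⟩ := h b hb
  have cc : ∀ {γ : V} {X : V → Subgroup G}, γ ∈ Oth Φ β → CommRel Φ XA X X → ∀ {x}, x ∈ X γ →
      (d * c) * x * (d * c)⁻¹ ∈ GenS X (Cone Φ γ β) := by
    intro γ X hγ hX x hx
    have hi := H.ind' hβ hγ
    have h1 := cone_conj hi hX (mem_coneP_neg (H.neg β hβ)) hc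
      (le_GenS (mem_cone_self hγ.1) hx)
    have h2 := cone_conj hi hX (mem_coneP_right hβ) hd h1
    simpa [mul_assoc] using h2
  have p1 : (d * c) * r * (d * c)⁻¹ ∈ Qp Φ XA XJ :=
    conj_GenS (fun ν hν x hx => H.FJ_le (GenS_mono cone_subset (cc hν H.AJ hx))) hr
  have p2 := cc hδ H.AA hx0
  have p3 := cc hε H.AJ he
  set w := (d * c) * x0 * (d * c)⁻¹ with hw
  have p4 : w * ((d * c) * e * (d * c)⁻¹) * w⁻¹ ∈ Qp Φ XA XJ := by
    refine conj_GenS (fun σ hσ x hx => ?_) p3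
    obtain ⟨γ₁, h₁, γ₂, h₂, x₁, hx₁, x₂, hx₂, x₃, hx₃, hwe⟩ := hst σ hσ w p2
    rw [hwe]
    set Z := x₃ * x * x₃⁻¹ with hZ
    have q1 : Z ∈ Qp Φ XA XJ := Subgroup.subset_closure ⟨σ, hσ.1, x₃, hx₃, x, hx, rfl⟩
    have q2 := H.commZ hσ.1 h₂ (le_GenS (mem_cone_self h₂.1) hx₂) hx₃ hx
    have q3 := H.commZ hσ.1 h₁ (le_GenS (mem_cone_self h₁.1) hx₁) hx₃ hx
    have : x₁ * x₂ * x₃ * x * (x₁ * x₂ * x₃)⁻¹ = (x₁ * ⁅x₂, Z⁆ * x₁⁻¹) * ⁅x₁, Z⁆ * Z := by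
      simp [commutatorElement_def, mul_assoc, hZ]
    rw [this]
    exact mul_mem (mul_mem (H.conjF h₁.1 hx₁ (GenS_mono cone_subset q2))
      (H.FJ_le (GenS_mono cone_subset q3))) q1
  have : d * (c * (x0 * e * x0⁻¹ * r) * c⁻¹) * d⁻¹ =
      (w * ((d * c) * e * (d * c)⁻¹) * w⁻¹) * ((d * c) * r * (d * c)⁻¹) := by
    simp [hw, mul_assoc]
  rw [this]
  exact mul_mem p4 p1

theorem Qp_normal : (Qp Φ XA XJ).Normal := by
  rw [← Subgroup.normalizer_eq_top_iff, eq_top_iff, ← H.top]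
  have key : ∀ γ ∈ Φ, ∀ g ∈ XA γ, ∀ z ∈ Qp Φ XA XJ, g * z * g⁻¹ ∈ Qp Φ XA XJ := by
    intro γ hγ g hg z hz
    have : Qp Φ XA XJ ≤ (Qp Φ XA XJ).comap (MulAut.conj g).toMonoidHom := by
      refine (Subgroup.closure_le _).2 ?_
      rintro z ⟨β, hβ, c, hc, b, hb, rfl⟩
      change g * (c * b * c⁻¹) * g⁻¹ ∈ Qp Φ XA XJ
      by_cases h1 : γ = β
      · subst h1; exact H.conjB hβ hg hc hb
      by_cases h2 : γ = -β
      · subst h2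
        exact Subgroup.subset_closure ⟨β, hβ, g * c, mul_mem hg hc, b, hb, by simp [mul_assoc]⟩
      have hγ' : γ ∈ Oth Φ β := ⟨hγ, h1, h2⟩
      have e : g * (c * b * c⁻¹) * g⁻¹ = ⁅g, c * b * c⁻¹⁆ * (c * b * c⁻¹) := by
        simp [commutatorElement_def, mul_assoc]
      rw [e]
      refine mul_mem (H.FJ_le (GenS_mono cone_subset
        (H.commZ hβ hγ' (le_GenS (mem_cone_self hγ) hg) hc hb)))
        (Subgroup.subset_closure ⟨β, hβ, c, hc, b, hb, rfl⟩)
    exact this hz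
  refine GenS_le fun γ hγ g hg => ?_
  rw [Subgroup.mem_normalizer_iff]
  intro z
  refine ⟨key γ hγ g hg z, fun hh => ?_⟩
  simpa [mul_assoc] using key γ hγ _ (inv_mem hg) _ hh

theorem pZ_ne [L.Normal] {α β : V} (hβ : β ∈ Φ) (hα : α ∈ Φ) (hne : α ≠ β) {p c b : G}
    (hp : p ∈ XI α) (hc : c ∈ XA (-β)) (hb : b ∈ XJ β) :
    ⁅p, c * b * c⁻¹⁆ ∈ Ytil Φ XI XJ L := by
  have := H.Ytil_normal
  have e : ⁅p, c * b * c⁻¹⁆ = c * ⁅c⁻¹ * p * c⁻¹⁻¹, b⁆ * c⁻¹ := by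
    simp [commutatorElement_def, mul_assoc]
  rw [e]
  refine Subgroup.Normal.conj_mem inferInstance _ ?_ c
  refine H.FF ?_ (le_GenS hβ hb)
  by_cases h2 : α = -β
  · subst h2
    have : c⁻¹ * p * c⁻¹⁻¹ = p := by
      rw [(H.abel _ hα _ (inv_mem hc) _ (H.leI _ hp)).eq]; simp
    rw [this]; exact le_GenS hα hp
  · exact GenS_mono cone_subset (cone_conj (H.ind' hβ ⟨hα, hne, h2⟩) H.AI
      (mem_coneP_neg (H.neg β hβ)) (inv_mem hc) (le_GenS (mem_cone_self hα) hp))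

theorem pZ [L.Normal] {α β : V} (hβ : β ∈ Φ) (hα : α ∈ Φ) {p c b : G}
    (hp : p ∈ XI α) (hc : c ∈ XA (-β)) (hb : b ∈ XJ β) :
    ⁅p, c * b * c⁻¹⁆ ∈ Ytil Φ XI XJ L := by
  have := H.Ytil_normal
  by_cases hne : α = β
  swap
  · exact H.pZ_ne hβ hα hne hp hc hb
  subst hne
  obtain ⟨δ, hδ, ε, hε, x0, hx0, -, h, -, -⟩ := H.gen α hα
  obtain ⟨e, he, r, hr, rfl⟩ := h p hp
  set Z := c * b * c⁻¹ with hZ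
  rw [← mem_CM]
  refine mul_mem ?_ ((GenS_le (H := CM (Ytil Φ XI XJ L) Z) fun ν hν x hx =>
    H.pZ_ne hβ hν.1 hν.2.1 hx hc hb) hr)
  rw [mem_CM]
  have h1 := H.commZ hβ hδ (le_GenS (mem_cone_self hδ.1) (inv_mem hx0)) hc hb
  have h2 : ⁅e, ⁅x0⁻¹, Z⁆⁆ ∈ Ytil Φ XI XJ L :=
    H.FF (le_GenS hε.1 he) (GenS_mono cone_subset h1)
  have h3 : ⁅e, Z⁆ ∈ Ytil Φ XI XJ L := H.pZ_ne hβ hε.1 hε.2.1 he hc hb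
  have e1 : ⁅x0 * e * x0⁻¹, Z⁆ =
      x0 * (⁅e, ⁅x0⁻¹, Z⁆⁆ * (⁅x0⁻¹, Z⁆ * ⁅e, Z⁆ * ⁅x0⁻¹, Z⁆⁻¹)) * x0⁻¹ := by
    simp [commutatorElement_def, mul_assoc]
  rw [e1]
  exact Subgroup.Normal.conj_mem inferInstance _
    (mul_mem h2 (Subgroup.Normal.conj_mem inferInstance _ h3 _)) _

theorem main [L.Normal] {p q : G}
    (hp : p ∈ Subgroup.normalClosure (GenS XI Φ : Set G))
    (hq : q ∈ Subgroup.normalClosure (GenS XJ Φ : Set G)) :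
    ⁅p, q⁆ ∈ Ytil Φ XI XJ L := by
  have := H.Ytil_normal
  have := H.Qp_normal
  have hq' : q ∈ Qp Φ XA XJ := Subgroup.normalClosure_le_normal H.FJ_le hq
  have h0 : ∀ p ∈ GenS XI Φ, ∀ q ∈ Qp Φ XA XJ, ⁅p, q⁆ ∈ Ytil Φ XI XJ L := by
    intro p hp q hq
    refine cm_left (fun α hα p hp => cm_symm ?_) hp
    have : Qp Φ XA XJ ≤ CM (Ytil Φ XI XJ L) p := by
      refine (Subgroup.closure_le _).2 ?_
      rintro z ⟨β, hβ, c, hc, b, hb, rfl⟩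
      exact cm_symm (H.pZ hβ hα hp hc hb)
    exact this hq
  have h1 : Subgroup.normalClosure (GenS XI Φ : Set G) ≤ CM (Ytil Φ XI XJ L) q := by
    refine (Subgroup.closure_le _).2 ?_
    intro z hz
    obtain ⟨x, hx, hxz⟩ := Group.mem_conjugatesOfSet_iff.1 hz
    obtain ⟨g, rfl⟩ := isConj_iff.1 hxz
    change ⁅g * x * g⁻¹, q⁆ ∈ Ytil Φ XI XJ L
    have e : ⁅g * x * g⁻¹, q⁆ = g * ⁅x, g⁻¹ * q * g⁻¹⁻¹⁆ * g⁻¹ := by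
      simp [commutatorElement_def, mul_assoc]
    rw [e]
    exact Subgroup.Normal.conj_mem inferInstance _
      (h0 x hx _ (Subgroup.Normal.conj_mem inferInstance _ hq' _)) _
  exact h1 hp

end RGH

/-- final reduction -/
theorem triple_abs {L R N : Subgroup G} [L.Normal] [N.Normal] {S : Set G}
    (hR : R = Subgroup.normalClosure S) (hN : ⁅L, R⁆ ≤ N)
    {y : G} (hy : ∀ g : G, ⁅g, y⁆ ∈ L)
    (hS : ∀ M : Subgroup G, M.Normal → (∀ x ∈ R, ⁅y, x⁆ ∈ N → x ∈ M) → S ⊆ M)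
    {x : G} (hx : x ∈ R) : ⁅y, x⁆ ∈ N := by
  have hRn : R.Normal := by rw [hR]; infer_instance
  let M : Subgroup G :=
    { carrier := {x | x ∈ R ∧ ⁅y, x⁆ ∈ N}
      mul_mem' := by
        rintro a b ⟨ha, ha'⟩ ⟨hb, hb'⟩
        refine ⟨mul_mem ha hb, ?_⟩
        exact cm_symm ((CM N y).mul_mem (cm_symm ha') (cm_symm hb'))
      one_mem' := ⟨one_mem _, by simp [commutatorElement_def]⟩
      inv_mem' := by
        rintro a ⟨ha, ha'⟩
        exact ⟨inv_mem ha, cm_symm ((CM N y).inv_mem (cm_symm ha'))⟩ }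
  have hM : M.Normal := by
    refine ⟨?_⟩
    rintro x ⟨hx, hx'⟩ g
    refine ⟨hRn.conj_mem x hx g, ?_⟩
    have h1 : ⁅g⁻¹, y⁆ ∈ L := hy _
    have h2 : ⁅⁅g⁻¹, y⁆, x⁆ ∈ N := hN (Subgroup.commutator_mem_commutator h1 hx)
    have e : ⁅y, g * x * g⁻¹⁆ =
        g * (⁅g⁻¹, y⁆ * ⁅y, x⁆ * ⁅g⁻¹, y⁆⁻¹ * ⁅⁅g⁻¹, y⁆, x⁆) * g⁻¹ := by
      simp [commutatorElement_def, mul_assoc]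
    rw [e]
    exact Subgroup.Normal.conj_mem inferInstance _ (mul_mem
      (Subgroup.Normal.conj_mem inferInstance _ hx' _) h2) _
  have : R ≤ M := by
    rw [hR]
    exact Subgroup.normalClosure_le_normal (hS M hM fun x hx h => ⟨hx, h⟩)
  exact (this hx).2

end AbstractRG2

set_option linter.unusedSimpArgs false
namespace FormRingData

section coef

variable {A : Type*} [Ring A] {n : ℕ} (D : FormRingData A)

def m (i j : Idx n) : A := D.lpow ((Idx.eps j - Idx.eps i) / 2)

def u (i : Idx n) : A := D.lpow (-(Idx.eps i + 1) / 2)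

theorem bar_one : D.bar 1 = 1 := by
  have h := D.bar_mul (D.bar 1) 1
  rw [mul_one, D.bar_bar, mul_one] at h
  exact h.symm

theorem bar_lam : D.bar D.lam * D.lam = 1 := by
  rw [← D.lam_comm, D.lam_bar]

theorem barlam_comm (a : A) : D.bar D.lam * a = a * D.bar D.lam := by
  have := congrArg D.bar (D.lam_comm (D.bar a))
  rw [D.bar_mul, D.bar_mul, D.bar_bar] at this
  exact this.symm

theorem lpow_cases : D.lpow 0 = 1 ∧ D.lpow 1 = D.lam ∧ D.lpow (-1) = D.bar D.lam := by
  refine ⟨?_, ?_, ?_⟩ <;> simp [lpow]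

theorem m_eq (i j : Idx n) : D.m i j =
    if i.2 = j.2 then 1 else if i.2 then D.bar D.lam else D.lam := by
  obtain ⟨h0, h1, h2⟩ := D.lpow_cases
  rcases i with ⟨i, _ | _⟩ <;> rcases j with ⟨j, _ | _⟩ <;>
    simp [m, Idx.eps, h0, h1, h2]

theorem u_eq (i : Idx n) : D.u i = if i.2 then D.bar D.lam else 1 := by
  obtain ⟨h0, h1, h2⟩ := D.lpow_cases
  rcases i with ⟨i, _ | _⟩ <;> simp [u, Idx.eps, h0, h2]

theorem m_comm (i j : Idx n) (a : A) : a * D.m i j = D.m i j * a := by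
  rw [m_eq]; split_ifs <;> simp [D.lam_comm, D.barlam_comm]

theorem m_left (i j : Idx n) (a b : A) : a * (D.m i j * b) = D.m i j * (a * b) := by
  rw [← mul_assoc, m_comm, mul_assoc]

theorem u_comm (i : Idx n) (a : A) : a * D.u i = D.u i * a := by
  rw [u_eq]; split_ifs <;> simp [D.barlam_comm]

theorem u_left (i : Idx n) (a b : A) : a * (D.u i * b) = D.u i * (a * b) := by
  rw [← mul_assoc, u_comm, mul_assoc]

theorem m_mul (i j l : Idx n) : D.m i j * D.m j l = D.m i l := by
  rcases i with ⟨i, _ | _⟩ <;> rcases j with ⟨j, _ | _⟩ <;> rcases l with ⟨l, _ | _⟩ <;>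
    simp [m_eq, D.lam_bar, D.bar_lam]

theorem m_mul' (i j l : Idx n) (a : A) : D.m i j * (D.m j l * a) = D.m i l * a := by
  rw [← mul_assoc, m_mul]

theorem m_self (i : Idx n) : D.m i i = 1 := by simp [m_eq]

theorem m_swap (i j k : Idx n) (a : A) : D.m j k * (D.m i j * a) = D.m i k * a := by
  rw [← mul_assoc, ← m_comm, m_mul]

theorem bar_m (i j : Idx n) : D.bar (D.m i j) = D.m j i := by
  rcases i with ⟨i, _ | _⟩ <;> rcases j with ⟨j, _ | _⟩ <;>
    simp [m_eq, D.bar_one, D.bar_bar]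

theorem bar_mm (i j : Idx n) (a : A) : D.bar (D.m i j * a) = D.m j i * D.bar a := by
  rw [D.bar_mul, bar_m, m_comm]

theorem m_neg (i j : Idx n) : D.m (Idx.neg j) (Idx.neg i) = D.m i j := by
  rcases i with ⟨i, _ | _⟩ <;> rcases j with ⟨j, _ | _⟩ <;> simp [m_eq, Idx.neg]

theorem m_neg' (i j : Idx n) : D.m (Idx.neg j) i = D.m (Idx.neg i) j := by
  rcases i with ⟨i, _ | _⟩ <;> rcases j with ⟨j, _ | _⟩ <;> simp [m_eq, Idx.neg]

theorem m_neg'' (i j : Idx n) : D.m j (Idx.neg i) = D.m i (Idx.neg j) := by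
  rcases i with ⟨i, _ | _⟩ <;> rcases j with ⟨j, _ | _⟩ <;> simp [m_eq, Idx.neg]

theorem u_m (i k : Idx n) (a : A) : D.u k * (D.m i k * a) = D.u i * a := by
  rcases i with ⟨i, _ | _⟩ <;> rcases k with ⟨j, _ | _⟩ <;>
    simp [m_eq, u_eq, ← mul_assoc, D.bar_lam]

/-- the unit inverse to `u i` -/
def ui (i : Idx n) : A := D.bar (D.u i)

theorem u_ui (i : Idx n) (a : A) : D.u i * (D.ui i * a) = a := by
  rcases i with ⟨i, _ | _⟩ <;> simp [ui, u_eq, D.bar_one, D.bar_bar, ← mul_assoc, D.bar_lam]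

theorem ui_u (i : Idx n) (a : A) : D.ui i * (D.u i * a) = a := by
  rcases i with ⟨i, _ | _⟩ <;> simp [ui, u_eq, D.bar_one, D.bar_bar, ← mul_assoc, D.lam_bar]

/-- the symmetry condition satisfied by long coefficients -/
theorem long_sym (i : Idx n) {g : A} (hg : g ∈ D.Lambda) :
    D.u i * g = -(D.m i (Idx.neg i) * D.bar (D.u i * g)) := by
  have h := D.lambdaMax_mem g hg
  rcases i with ⟨i, _ | _⟩
  · simpa [u_eq, m_eq, Idx.neg] using h
  · simp only [u_eq, m_eq, Idx.neg, D.bar_mul]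
    simp only [if_true, Bool.not_true]
    conv_lhs => rw [h]
    simp [D.lam_comm, D.bar_bar]

theorem antisym (i : Idx n) (c : A) :
    ∃ c', (c' = c ∨ c' = -(D.bar c)) ∧
      c - D.m i (Idx.neg i) * D.bar c = D.u i * (c' - D.lam * D.bar c') := by
  rcases i with ⟨i, _ | _⟩
  · exact ⟨c, Or.inl rfl, by simp [u_eq, m_eq, Idx.neg]⟩
  · refine ⟨_, Or.inr rfl, ?_⟩
    simp [u_eq, m_eq, Idx.neg, D.bar_bar, mul_add, ← mul_assoc, D.bar_lam]
    abel

end coef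

section mats

variable {A : Type*} [Ring A] {n : ℕ} (D : FormRingData A)

theorem T_short {i j : Idx n} (h : i ≠ j) (h' : j ≠ Idx.neg i) (a : A) :
    (D.T i j a).val = 1 + Matrix.single i j a
      + -Matrix.single (Idx.neg j) (Idx.neg i) (D.m i j * D.bar a) := by
  simp [T, h', TS, h, Xmat, m, sub_eq_add_neg, add_assoc]

theorem T_long (i : Idx n) (a : A) :
    (D.T i (Idx.neg i) a).val = 1 + Matrix.single i (Idx.neg i) a := by
  simp [T, TL]

theorem neg_eq_iff {i j : Idx n} : Idx.neg i = j ↔ i = Idx.neg j :=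
  ⟨fun h => by rw [← h, Idx.neg_neg], fun h => by rw [h, Idx.neg_neg]⟩

theorem neg_inj {i j : Idx n} : Idx.neg i = Idx.neg j ↔ i = j := Idx.neg_injective.eq_iff

theorem sms (i j k l : Idx n) (a b : A) : Matrix.single i j a * Matrix.single k l b =
    if j = k then Matrix.single i l (a * b) else 0 := by
  split_ifs with h
  · subst h; simp
  · exact Matrix.single_mul_single_of_ne _ _ _ _ h _

theorem ne_neg (i : Idx n) : i ≠ Idx.neg i := (Idx.neg_ne i).symm

theorem T_add {i j : Idx n} (h : i ≠ j) (a b : A) : D.T i j (a + b) = D.T i j a * D.T i j b := by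
  apply Units.ext
  rw [Units.val_mul]
  by_cases h' : j = Idx.neg i
  · subst h'
    simp [T_long, mul_add, add_mul, sms, neg_eq_iff, ne_neg, Idx.neg_neg, Matrix.single_add, h,
      h.symm]
    try abel
  · have h1 : i ≠ Idx.neg j := fun e => h' (by rw [e, Idx.neg_neg])
    simp [T_short D h h', mul_add, add_mul, sms, neg_eq_iff, neg_inj, ne_neg, Idx.neg_neg,
      Matrix.single_add, h, h.symm, h', h1, h1.symm]
    abel

theorem T_flip {i j : Idx n} (h : i ≠ j) (h' : j ≠ Idx.neg i) (a : A) :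
    D.T (Idx.neg j) (Idx.neg i) (-(D.m i j * D.bar a)) = D.T i j a := by
  apply Units.ext
  rw [T_short D h h', T_short D (fun e => h (Idx.neg_injective e).symm)
    (by rw [Idx.neg_neg]; exact fun e => h' e.symm)]
  simp [Idx.neg_neg, bar_mm, m_neg, m_mul', m_self, D.bar_bar, stdBasisMatrix_neg']
  abel

theorem T_unif {i j : Idx n} (h : i ≠ j) (a : A) : ∃ a', (D.T i j a).val =
    1 + (Matrix.single i j a + Matrix.single (Idx.neg j) (Idx.neg i) a') := by
  by_cases h' : j = Idx.neg i
  · subst h'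
    exact ⟨0, by simp [T_long]⟩
  · exact ⟨-(D.m i j * D.bar a), by
      rw [T_short D h h', stdBasisMatrix_neg', add_assoc]⟩

theorem T_comm {i j k l : Idx n} (h : i ≠ j) (h2 : k ≠ l) (hjk : j ≠ k) (hjl : j ≠ Idx.neg l)
    (hki : k ≠ Idx.neg i) (hil : i ≠ l) (a b : A) : Commute (D.T i j a) (D.T k l b) := by
  apply Units.ext
  simp only [Units.val_mul]
  have e1 : ∀ {p q : Idx n}, p ≠ Idx.neg q → Idx.neg p ≠ q := fun hh e => hh (neg_eq_iff.1 e)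
  obtain ⟨a', ha⟩ := D.T_unif h a
  obtain ⟨b', hb⟩ := D.T_unif h2 b
  rw [ha, hb]
  simp only [mul_add, add_mul, sms, one_mul, mul_one, neg_inj]
  rw [if_neg hjk, if_neg hjl, if_neg (fun e => hki e.symm), if_neg hil, if_neg hil.symm,
    if_neg (e1 hki), if_neg (fun e => hjl (by rw [e, Idx.neg_neg])), if_neg hjk.symm]
  abel

theorem comm_of {G : Type*} [Group G] {x y z : G} (h : x * y = z * (y * x)) : ⁅x, y⁆ = z := by
  rw [commutatorElement_def, h]; group

theorem T_C1 {i j l : Idx n} (h1 : i ≠ j) (h2 : i ≠ Idx.neg j) (h3 : j ≠ l) (h4 : j ≠ Idx.neg l)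
    (h5 : i ≠ l) (h6 : i ≠ Idx.neg l) (a b : A) :
    ⁅D.T i j a, D.T j l b⁆ = D.T i l (a * b) := by
  have e1 : ∀ {p q : Idx n}, p ≠ Idx.neg q → q ≠ Idx.neg p := fun hh e => hh (by rw [e, Idx.neg_neg])
  have hc : D.m j l * (D.bar b * (D.m i j * D.bar a)) = D.m i l * (D.bar b * D.bar a) := by
    rw [m_left, m_swap]
  apply comm_of
  apply Units.ext
  simp only [Units.val_mul]
  rw [T_short D h1 (e1 h2), T_short D h3 (e1 h4), T_short D h5 (e1 h6)]
  simp [mul_add, add_mul, sms, neg_eq_iff, neg_inj, h1, h2, h3, h4, h5, h6,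
    h1.symm, h2.symm, h3.symm, h4.symm, h5.symm, h6.symm, e1 h2, e1 h4, e1 h6, Idx.neg_neg,
    (Idx.neg_ne _).symm, Idx.neg_ne, D.bar_mul, mul_assoc, hc, ne_neg]
  abel

theorem T_C2 {i j : Idx n} (h1 : i ≠ j) (h2 : i ≠ Idx.neg j) (a b : A) :
    ⁅D.T i j a, D.T j (Idx.neg i) b⁆ =
      D.T i (Idx.neg i) (a * b - D.m i (Idx.neg i) * D.bar (a * b)) := by
  have e1 : ∀ {p q : Idx n}, p ≠ Idx.neg q → q ≠ Idx.neg p := fun hh e => hh (by rw [e, Idx.neg_neg])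
  have hc : D.m j (Idx.neg i) * (D.bar b * (D.m i j * D.bar a)) = D.m i (Idx.neg i) * (D.bar b * D.bar a) := by
    rw [m_left, m_swap]
  apply comm_of
  apply Units.ext
  simp only [Units.val_mul]
  rw [T_short D h1 (e1 h2), T_short D (e1 h2) (fun e => h1 (Idx.neg_injective e)), T_long]
  simp [mul_add, add_mul, sms, neg_eq_iff, neg_inj, h1, h2, 
    h1.symm, h2.symm, e1 h2, Idx.neg_neg, sub_eq_add_neg, Matrix.single_add, stdBasisMatrix_neg',
    (Idx.neg_ne _).symm, Idx.neg_ne, D.bar_mul, mul_assoc, hc, ne_neg]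
  abel

theorem T_C3 {i j : Idx n} (h1 : i ≠ j) (h2 : i ≠ Idx.neg j) (a d : A)
    (hd : d = -(D.m j (Idx.neg j) * D.bar d)) :
    ⁅D.T i j a, D.T j (Idx.neg j) d⁆ =
      D.T i (Idx.neg j) (a * d) * D.T i (Idx.neg i) (a * d * (D.m i j * D.bar a)) := by
  have e1 : ∀ {p q : Idx n}, p ≠ Idx.neg q → q ≠ Idx.neg p := fun hh e => hh (by rw [e, Idx.neg_neg])
  have hd' : D.m i (Idx.neg j) * (D.bar d * D.bar a) = - (d * (D.m i j * D.bar a)) := by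
    conv_rhs => rw [hd]
    rw [neg_mul, _root_.neg_neg, m_left, mul_assoc, m_left, m_swap]
  apply comm_of
  apply Units.ext
  simp only [Units.val_mul]
  rw [T_short D h1 (e1 h2), T_short D h2 (fun e => h1 (Idx.neg_injective e).symm), T_long, T_long]
  rw [D.bar_mul, hd']
  simp [mul_add, add_mul, sms, neg_eq_iff, neg_inj, h1, h2, 
    h1.symm, h2.symm, e1 h2, Idx.neg_neg, sub_eq_add_neg, Matrix.single_add, stdBasisMatrix_neg',
    (Idx.neg_ne _).symm, Idx.neg_ne, mul_assoc, ne_neg]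
  abel

end mats

end FormRingData

section formideals

variable {A : Type*} [Ring A] {D : FormRingData A}

theorem mulSub_mem {S T : AddSubgroup A} {a b : A} (ha : a ∈ S) (hb : b ∈ T) :
    a * b ∈ FormRingData.mulSub S T := AddSubgroup.subset_closure ⟨a, ha, b, hb, rfl⟩

theorem symI_mem {S T : AddSubgroup A} {a b : A} (ha : a ∈ S) (hb : b ∈ T) :
    a * b ∈ FormRingData.symI S T :=
  (le_sup_left : FormRingData.mulSub S T ≤ _) (mulSub_mem ha hb)

theorem symI_mem' {S T : AddSubgroup A} {a b : A} (ha : a ∈ S) (hb : b ∈ T) :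
    b * a ∈ FormRingData.symI S T :=
  (le_sup_right : FormRingData.mulSub T S ≤ _) (mulSub_mem hb ha)

theorem symI_comm (S T : AddSubgroup A) : FormRingData.symI S T = FormRingData.symI T S :=
  sup_comm _ _

theorem symI_le {S T K : AddSubgroup A} (h1 : ∀ a ∈ S, ∀ b ∈ T, a * b ∈ K)
    (h2 : ∀ a ∈ S, ∀ b ∈ T, b * a ∈ K) : FormRingData.symI S T ≤ K := by
  refine sup_le ?_ ?_ <;> refine (AddSubgroup.closure_le _).2 ?_
  · rintro _ ⟨a, ha, b, hb, rfl⟩; exact h1 a ha b hb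
  · rintro _ ⟨a, ha, b, hb, rfl⟩; exact h2 b hb a ha

theorem symG_comm (I Γ J Δ : AddSubgroup A) : D.symG I Γ J Δ = D.symG J Δ I Γ := by
  unfold FormRingData.symG
  rw [symI_comm, sup_right_comm]

theorem symG_le {I Γ J Δ K : AddSubgroup A} (h0 : D.gammaMin (FormRingData.symI I J) ≤ K)
    (h1 : ∀ b ∈ J, ∀ g ∈ Γ, b * g * D.bar b ∈ K) (h2 : ∀ b ∈ I, ∀ g ∈ Δ, b * g * D.bar b ∈ K) :
    D.symG I Γ J Δ ≤ K := by
  refine sup_le (sup_le h0 ?_) ?_ <;> refine (AddSubgroup.closure_le _).2 ?_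
  · rintro _ ⟨a, ha, b, hb, rfl⟩; exact h1 a ha b hb
  · rintro _ ⟨a, ha, b, hb, rfl⟩; exact h2 a ha b hb

theorem gammaMin_le_iff {K H : AddSubgroup A} : D.gammaMin K ≤ H ↔
    (∀ a ∈ K, a - D.lam * D.bar a ∈ H) ∧ (∀ a ∈ K, ∀ c ∈ D.Lambda, a * c * D.bar a ∈ H) := by
  unfold FormRingData.gammaMin
  rw [AddSubgroup.closure_le]
  constructor
  · intro h
    exact ⟨fun a ha => h (Or.inl ⟨a, ha, rfl⟩), fun a ha c hc => h (Or.inr ⟨a, ha, c, hc, rfl⟩)⟩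
  · rintro ⟨h1, h2⟩ _ (⟨a, ha, rfl⟩ | ⟨a, ha, c, hc, rfl⟩)
    · exact h1 a ha
    · exact h2 a ha c hc

theorem gammaMin_mono {K H : AddSubgroup A} (h : K ≤ H) : D.gammaMin K ≤ D.gammaMin H := by
  obtain ⟨h1, h2⟩ := (gammaMin_le_iff (D := D) (K := H)).1 le_rfl
  exact gammaMin_le_iff.2 ⟨fun a ha => h1 a (h ha), fun a ha => h2 a (h ha)⟩

theorem conjPar_mem {S Γ : AddSubgroup A} {b g : A} (hb : b ∈ S) (hg : g ∈ Γ) :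
    b * g * D.bar b ∈ D.conjPar S Γ := AddSubgroup.subset_closure ⟨b, hb, g, hg, rfl⟩

theorem symG_mem1 {I Γ J Δ : AddSubgroup A} {b g : A} (hb : b ∈ J) (hg : g ∈ Γ) :
    b * g * D.bar b ∈ D.symG I Γ J Δ :=
  AddSubgroup.mem_sup_left (AddSubgroup.mem_sup_right (conjPar_mem hb hg))

theorem symG_mem2 {I Γ J Δ : AddSubgroup A} {b g : A} (hb : b ∈ I) (hg : g ∈ Δ) :
    b * g * D.bar b ∈ D.symG I Γ J Δ := AddSubgroup.mem_sup_right (conjPar_mem hb hg)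

theorem symG_min (I Γ J Δ : AddSubgroup A) : D.gammaMin (FormRingData.symI I J) ≤ D.symG I Γ J Δ :=
  le_sup_left.trans le_sup_left

/-- the whole ring as a form ideal -/
def FTop (D : FormRingData A) : FormIdeal D where
  I := ⊤
  Gamma := D.Lambda
  mul_mem_left := fun _ _ _ => trivial
  mul_mem_right := fun _ _ _ => trivial
  bar_mem := fun _ _ => trivial
  gammaMin_le := gammaMin_le_iff.2
    ⟨fun a _ => D.lambdaMin_mem a, fun a _ c hc => D.lambda_conj a c hc⟩
  gamma_le_I := le_top
  gamma_le_Lambda := le_rfl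
  gamma_conj := D.lambda_conj

/-- conjugation as an additive map -/
def cj (D : FormRingData A) (c : A) : A →+ A where
  toFun := fun x => c * x * D.bar c
  map_zero' := by simp
  map_add' := by intros; simp [mul_add, add_mul]

theorem FSym_left (F F' : FormIdeal D) :
    ∀ (c : A), ∀ x ∈ FormRingData.symI F.I F'.I, c * x ∈ FormRingData.symI F.I F'.I := by
  intro c
  refine fun x hx => symI_le (K := (FormRingData.symI F.I F'.I).comap (AddMonoidHom.mulLeft c)) ?_ ?_ hx
  · intro a ha b hb
    simp only [AddSubgroup.mem_comap, AddMonoidHom.coe_mulLeft, ← mul_assoc]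
    exact symI_mem (F.mul_mem_left _ _ ha) hb
  · intro a ha b hb
    simp only [AddSubgroup.mem_comap, AddMonoidHom.coe_mulLeft, ← mul_assoc]
    exact symI_mem' ha (F'.mul_mem_left _ _ hb)

theorem FSym_right (F F' : FormIdeal D) :
    ∀ (c : A), ∀ x ∈ FormRingData.symI F.I F'.I, x * c ∈ FormRingData.symI F.I F'.I := by
  intro c
  refine fun x hx => symI_le (K := (FormRingData.symI F.I F'.I).comap (AddMonoidHom.mulRight c)) ?_ ?_ hx
  · intro a ha b hb
    simp only [AddSubgroup.mem_comap, AddMonoidHom.coe_mulRight, mul_assoc]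
    exact symI_mem ha (F'.mul_mem_right _ _ hb)
  · intro a ha b hb
    simp only [AddSubgroup.mem_comap, AddMonoidHom.coe_mulRight, mul_assoc]
    exact symI_mem' (F.mul_mem_right _ _ ha) hb

theorem FSym_bar (F F' : FormIdeal D) :
    ∀ x ∈ FormRingData.symI F.I F'.I, D.bar x ∈ FormRingData.symI F.I F'.I := by
  refine fun x hx => symI_le (K := (FormRingData.symI F.I F'.I).comap D.bar) ?_ ?_ hx
  · intro a ha b hb
    simp only [AddSubgroup.mem_comap, D.bar_mul]
    exact symI_mem' (F.bar_mem _ ha) (F'.bar_mem _ hb)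
  · intro a ha b hb
    simp only [AddSubgroup.mem_comap, D.bar_mul]
    exact symI_mem (F.bar_mem _ ha) (F'.bar_mem _ hb)

/-- the symmetrised product as a form ideal -/
def FSym (F F' : FormIdeal D) : FormIdeal D where
  I := FormRingData.symI F.I F'.I
  Gamma := D.symG F.I F.Gamma F'.I F'.Gamma
  mul_mem_left := FSym_left F F'
  mul_mem_right := FSym_right F F'
  bar_mem := FSym_bar F F'
  gammaMin_le := symG_min _ _ _ _
  gamma_le_I := by
    refine symG_le (gammaMin_le_iff.2 ⟨fun a ha => ?_, fun a ha c _ => ?_⟩) ?_ ?_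
    · exact sub_mem ha (FSym_left F F' _ _ (FSym_bar F F' _ ha))
    · exact FSym_right F F' _ _ (FSym_right F F' _ _ ha)
    · intro b hb g hg
      exact FSym_right F F' _ _ (symI_mem' (F.gamma_le_I hg) hb)
    · intro b hb g hg
      exact FSym_right F F' _ _ (symI_mem hb (F'.gamma_le_I hg))
  gamma_le_Lambda := by
    refine symG_le (gammaMin_le_iff.2 ⟨fun a _ => D.lambdaMin_mem a, fun a _ c hc => D.lambda_conj a c hc⟩) ?_ ?_
    · intro b _ g hg; exact D.lambda_conj b g (F.gamma_le_Lambda hg)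
    · intro b _ g hg; exact D.lambda_conj b g (F'.gamma_le_Lambda hg)
  gamma_conj := by
    intro c
    have key : ∀ b g : A, c * (b * g * D.bar b) * D.bar c = (c * b) * g * D.bar (c * b) := by
      intro b g; rw [D.bar_mul]; simp only [mul_assoc]
    obtain ⟨h1, h2⟩ := gammaMin_le_iff.1 (symG_min (D := D) F.I F.Gamma F'.I F'.Gamma)
    refine fun x hx => symG_le
      (K := (D.symG F.I F.Gamma F'.I F'.Gamma).comap (cj D c))
      (gammaMin_le_iff.2 ⟨fun a ha => ?_, fun a ha d hd => ?_⟩) ?_ ?_ hx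
    · have e : c * (a - D.lam * D.bar a) * D.bar c =
          c * a * D.bar c - D.lam * D.bar (c * a * D.bar c) := by
        rw [D.bar_mul, D.bar_mul, D.bar_bar, mul_sub, sub_mul, ← mul_assoc c D.lam, ← D.lam_comm c]
        simp only [mul_assoc]
      change c * (a - D.lam * D.bar a) * D.bar c ∈ D.symG F.I F.Gamma F'.I F'.Gamma
      rw [e]
      exact h1 _ (FSym_right F F' _ _ (FSym_left F F' _ _ ha))
    · change c * (a * d * D.bar a) * D.bar c ∈ D.symG F.I F.Gamma F'.I F'.Gamma
      rw [key]
      exact h2 _ (FSym_left F F' _ _ ha) _ hd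
    · intro b hb g hg
      change c * (b * g * D.bar b) * D.bar c ∈ D.symG F.I F.Gamma F'.I F'.Gamma
      rw [key]
      exact symG_mem1 (F'.mul_mem_left _ _ hb) hg
    · intro b hb g hg
      change c * (b * g * D.bar b) * D.bar c ∈ D.symG F.I F.Gamma F'.I F'.Gamma
      rw [key]
      exact symG_mem2 (F.mul_mem_left _ _ hb) hg

variable {n : ℕ}

theorem pmem_short {I Γ : AddSubgroup A} {i j : Idx n} (h : j ≠ Idx.neg i) {a : A} :
    D.pmem I Γ i j a ↔ a ∈ I := by simp [FormRingData.pmem, h]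

theorem pmem_long {I Γ : AddSubgroup A} {i : Idx n} {a : A} :
    D.pmem I Γ i (Idx.neg i) a ↔ ∃ g ∈ Γ, a = D.u i * g := by
  simp [FormRingData.pmem, FormRingData.u]

theorem pmem_add {I Γ : AddSubgroup A} {i j : Idx n} {a b : A} (ha : D.pmem I Γ i j a)
    (hb : D.pmem I Γ i j b) : D.pmem I Γ i j (a + b) := by
  by_cases h : j = Idx.neg i
  · subst h
    rw [pmem_long] at *
    obtain ⟨g, hg, rfl⟩ := ha
    obtain ⟨g', hg', rfl⟩ := hb
    exact ⟨g + g', add_mem hg hg', by rw [mul_add]⟩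
  · rw [pmem_short h] at *
    exact add_mem ha hb

theorem pmem_neg {I Γ : AddSubgroup A} {i j : Idx n} {a : A} (ha : D.pmem I Γ i j a) :
    D.pmem I Γ i j (-a) := by
  by_cases h : j = Idx.neg i
  · subst h
    rw [pmem_long] at *
    obtain ⟨g, hg, rfl⟩ := ha
    exact ⟨-g, neg_mem hg, by rw [mul_neg]⟩
  · rw [pmem_short h] at *
    exact neg_mem ha

theorem pmem_zero {I Γ : AddSubgroup A} {i j : Idx n} : D.pmem I Γ i j (0 : A) := by
  by_cases h : j = Idx.neg i
  · subst h
    rw [pmem_long]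
    exact ⟨0, zero_mem _, by simp⟩
  · rw [pmem_short h]
    exact zero_mem _

theorem pmem_mono {I Γ I' Γ' : AddSubgroup A} (h1 : I ≤ I') (h2 : Γ ≤ Γ') {i j : Idx n} {a : A}
    (ha : D.pmem I Γ i j a) : D.pmem I' Γ' i j a := by
  by_cases h : j = Idx.neg i
  · subst h
    rw [pmem_long] at *
    obtain ⟨g, hg, e⟩ := ha
    exact ⟨g, h2 hg, e⟩
  · rw [pmem_short h] at *
    exact h1 ha

namespace FormIdeal

/-- membership at a position -/
def pm (F : FormIdeal D) (i j : Idx n) (a : A) : Prop := D.pmem F.I F.Gamma i j a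

/-- flipped coefficient -/
def _root_.FormRingData.fl (D : FormRingData A) (i j : Idx n) (a : A) : A := -(D.m i j * D.bar a)

theorem pm_top (F : FormIdeal D) {i j : Idx n} {a : A} (h : F.pm i j a) : (FTop D).pm i j a :=
  pmem_mono le_top F.gamma_le_Lambda h

theorem pm_fl_long (F : FormIdeal D) {i : Idx n} {a : A} (h : F.pm i (Idx.neg i) a) :
    D.fl i (Idx.neg i) a = a := by
  obtain ⟨g, hg, rfl⟩ := pmem_long.1 h
  exact (D.long_sym i (F.gamma_le_Lambda hg)).symm

theorem pm_fl (F : FormIdeal D) {i j : Idx n} {a : A} (h : F.pm i j a) :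
    F.pm (Idx.neg j) (Idx.neg i) (D.fl i j a) := by
  by_cases e : j = Idx.neg i
  · subst e
    rw [F.pm_fl_long h, Idx.neg_neg]
    exact h
  · have e' : Idx.neg i ≠ Idx.neg (Idx.neg j) := by
      rw [Idx.neg_neg]; exact fun h => e h.symm
    unfold pm at *
    rw [pmem_short e'] 
    rw [pmem_short e] at h
    exact neg_mem (F.mul_mem_left _ _ (F.bar_mem _ h))

theorem pm_u (F : FormIdeal D) {i : Idx n} {g : A} (h : g ∈ F.Gamma) :
    F.pm i (Idx.neg i) (D.u i * g) := pmem_long.2 ⟨g, h, rfl⟩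

theorem pm_s (F : FormIdeal D) {i j : Idx n} (hij : j ≠ Idx.neg i) {g : A} (h : g ∈ F.I) :
    F.pm i j g := (pmem_short hij).2 h

end FormIdeal

/-- abstract group with elementary unitary relations -/
structure UG (D : FormRingData A) (n : ℕ) (G : Type*) [Group G] (T : Idx n → Idx n → A → G) :
    Prop where
  add : ∀ {i j : Idx n}, i ≠ j → ∀ {a b : A}, (FTop D).pm i j a → (FTop D).pm i j b →
    T i j (a + b) = T i j a * T i j b
  flip : ∀ {i j : Idx n}, i ≠ j → ∀ {a : A}, (FTop D).pm i j a →
    T i j a = T (Idx.neg j) (Idx.neg i) (D.fl i j a)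
  comm : ∀ {i j k l : Idx n}, i ≠ j → k ≠ l → j ≠ k → j ≠ Idx.neg l → k ≠ Idx.neg i → i ≠ l →
    ∀ {a b : A}, (FTop D).pm i j a → (FTop D).pm k l b → Commute (T i j a) (T k l b)
  C1 : ∀ {i j l : Idx n}, i ≠ j → i ≠ Idx.neg j → j ≠ l → j ≠ Idx.neg l → i ≠ l → i ≠ Idx.neg l →
    ∀ a b : A, ⁅T i j a, T j l b⁆ = T i l (a * b)
  C2 : ∀ {i j : Idx n}, i ≠ j → i ≠ Idx.neg j → ∀ a b : A, ⁅T i j a, T j (Idx.neg i) b⁆ =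
      T i (Idx.neg i) (a * b - D.m i (Idx.neg i) * D.bar (a * b))
  C3 : ∀ {i j : Idx n}, i ≠ j → i ≠ Idx.neg j → ∀ a g : A, g ∈ D.Lambda →
    ⁅T i j a, T j (Idx.neg j) (D.u j * g)⁆ =
      T i (Idx.neg j) (D.u j * (a * g)) * T i (Idx.neg i) (D.u i * (a * g * D.bar a))
  gen : Subgroup.closure {x | ∃ i j a, i ≠ j ∧ (FTop D).pm i j a ∧ x = T i j a} = ⊤

theorem neg_ne_of {i j : Idx n} (h : i ≠ Idx.neg j) : j ≠ Idx.neg i :=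
  fun e => h (by rw [e, Idx.neg_neg])

theorem transvGen_eq (I Γ : AddSubgroup A) : D.transvGen n I Γ =
    {x | ∃ i j a, i ≠ j ∧ D.pmem I Γ i j a ∧ x = D.T i j a} := by
  ext x
  constructor
  · rintro (⟨i, j, h, h', c, hc, rfl⟩ | ⟨i, g, hg, rfl⟩)
    · exact ⟨i, j, c, h, (pmem_short (neg_ne_of h')).2 hc, by simp [FormRingData.T, neg_ne_of h']⟩
    · exact ⟨i, Idx.neg i, _, FormRingData.ne_neg i, pmem_long.2 ⟨g, hg, rfl⟩, by
        simp [FormRingData.T, FormRingData.u]⟩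
  · rintro ⟨i, j, a, h, ha, rfl⟩
    by_cases e : j = Idx.neg i
    · subst e
      obtain ⟨g, hg, rfl⟩ := pmem_long.1 ha
      exact Or.inr ⟨i, g, hg, by simp [FormRingData.T, FormRingData.u]⟩
    · exact Or.inl ⟨i, j, h, neg_ne_of e, a, (pmem_short e).1 ha, by simp [FormRingData.T, e]⟩

theorem T_mem_max {i j : Idx n} (h : i ≠ j) {a : A} (ha : (FTop D).pm i j a) :
    D.T i j a ∈ D.EUmax n := by
  refine Subgroup.subset_closure ?_
  rw [transvGen_eq]
  exact ⟨i, j, a, h, ha, rfl⟩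

open Classical in
/-- transvections as elements of `EUmax` -/
noncomputable def TE (D : FormRingData A) (n : ℕ) (i j : Idx n) (a : A) : D.EUmax n :=
  if h : D.T i j a ∈ D.EUmax n then ⟨D.T i j a, h⟩ else 1

theorem TE_val {i j : Idx n} (h : i ≠ j) {a : A} (ha : (FTop D).pm i j a) :
    ((TE D n i j a : D.EUmax n) : GLn A n) = D.T i j a := by
  simp [TE, T_mem_max h ha]

theorem TE_val' {i j : Idx n} (h : i ≠ j) (h' : j ≠ Idx.neg i) (a : A) :
    ((TE D n i j a : D.EUmax n) : GLn A n) = D.T i j a :=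
  TE_val h ((FTop D).pm_s h' (trivial : a ∈ (⊤ : AddSubgroup A)))

theorem UG_TE : UG D n (D.EUmax n) (TE D n) where
  add := by
    intro i j h a b ha hb
    apply Subtype.ext
    rw [Subgroup.coe_mul, TE_val h ha, TE_val h hb, TE_val h (pmem_add ha hb), D.T_add h]
  flip := by
    intro i j h a ha
    apply Subtype.ext
    have h' : Idx.neg j ≠ Idx.neg i := fun e => h (Idx.neg_injective e).symm
    rw [TE_val h ha, TE_val h' (FormIdeal.pm_fl _ ha)]
    by_cases e : j = Idx.neg i
    · subst e
      rw [FormIdeal.pm_fl_long _ ha, Idx.neg_neg]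
    · exact (D.T_flip h e a).symm
  comm := by
    intro i j k l h1 h2 h3 h4 h5 h6 a b ha hb
    apply Subtype.ext
    rw [Subgroup.coe_mul, Subgroup.coe_mul, TE_val h1 ha, TE_val h2 hb]
    exact D.T_comm h1 h2 h3 h4 h5 h6 a b
  C1 := by
    intro i j l h1 h2 h3 h4 h5 h6 a b
    apply Subtype.ext
    rw [TE_val' h5 (neg_ne_of h6), ← D.T_C1 h1 h2 h3 h4 h5 h6, ← TE_val' h1 (neg_ne_of h2),
      ← TE_val' h3 (neg_ne_of h4)]
    rfl
  C2 := by
    intro i j h1 h2 a b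
    apply Subtype.ext
    rw [TE_val (FormRingData.ne_neg i), ← D.T_C2 h1 h2, ← TE_val' h1 (neg_ne_of h2),
      ← TE_val' (neg_ne_of h2) (fun e => h1 (Idx.neg_injective e))]
    · rfl
    · obtain ⟨c, _, hc⟩ := D.antisym i (a * b)
      rw [hc]
      exact FormIdeal.pm_u _ (D.lambdaMin_mem c)
  C3 := by
    intro i j h1 h2 a g hg
    have e1 : a * (D.u j * g) = D.u j * (a * g) := D.u_left _ _ _
    have e2 : a * (D.u j * g) * (D.m i j * D.bar a) = D.u i * (a * g * D.bar a) := by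
      rw [e1, D.m_left, mul_assoc, D.u_left, D.u_m]
    have := D.T_C3 h1 h2 a (D.u j * g) (D.long_sym j hg)
    rw [e2, e1] at this
    apply Subtype.ext
    rw [Subgroup.coe_mul, TE_val (FormRingData.ne_neg i) (FormIdeal.pm_u _ (D.lambda_conj a g hg)),
      TE_val' h2 (fun e => h1 (Idx.neg_injective e).symm), ← this, ← TE_val' h1 (neg_ne_of h2),
      ← TE_val (FormRingData.ne_neg j) (FormIdeal.pm_u _ hg)]
    rfl
  gen := by
    refine top_unique (le_trans (Subgroup.closure_closure_coe_preimage
      (k := D.transvGen n ⊤ D.Lambda)).ge (Subgroup.closure_mono ?_))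
    intro x hx
    obtain ⟨i, j, a, h, ha, e⟩ := (transvGen_eq (D := D) (n := n) ⊤ D.Lambda).subset hx
    exact ⟨i, j, a, h, ha, Subtype.ext (by rw [TE_val h ha]; exact e)⟩

end formideals

section roots

variable {n : ℕ}

/-- weight of an index -/
def EE (i : Idx n) : Fin n → ℤ := Pi.single i.1 (Idx.eps i)

/-- root of a position -/
def rr (i j : Idx n) : Fin n → ℤ := EE i - EE j

def Phi (n : ℕ) : Set (Fin n → ℤ) := {v | ∃ i j : Idx n, i ≠ j ∧ v = rr i j}

theorem rr_mem {i j : Idx n} (h : i ≠ j) : rr i j ∈ Phi n := ⟨i, j, h, rfl⟩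

theorem eps_neg (i : Idx n) : Idx.eps (Idx.neg i) = - Idx.eps i := by
  rcases i with ⟨i, _ | _⟩ <;> simp [Idx.eps, Idx.neg]

theorem eps_abs (i : Idx n) : |Idx.eps i| = 1 := by
  rcases i with ⟨i, _ | _⟩ <;> simp [Idx.eps]

theorem EE_neg (i : Idx n) : EE (Idx.neg i) = - EE i := by
  unfold EE; rw [eps_neg, Pi.single_neg]; rfl

theorem rr_neg (i j : Idx n) : - rr i j = rr j i := by simp [rr]

theorem rr_flip (i j : Idx n) : rr (Idx.neg j) (Idx.neg i) = rr i j := by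
  simp [rr, EE_neg]; abel

theorem rr_add (i j l : Idx n) : rr i j + rr j l = rr i l := by simp [rr]

/-- coordinate -/
def cd (i : Idx n) (v : Fin n → ℤ) : ℤ := Idx.eps i * v i.1

theorem cd_EE (i k : Idx n) : cd i (EE k) = (if k = i then 1 else 0) - (if k = Idx.neg i then 1 else 0) := by
  unfold cd EE
  by_cases h : k.1 = i.1
  · obtain ⟨k, s⟩ := k
    obtain ⟨i, t⟩ := i
    simp only at h; subst h
    rcases s with _ | _ <;> rcases t with _ | _ <;> simp [Idx.eps, Idx.neg]
  · rw [Pi.single_eq_of_ne (fun e => h e.symm), if_neg (fun e => h (by rw [e])),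
      if_neg (fun e => h (by rw [e]; rfl))]; simp

theorem cd_sub (i : Idx n) (v w) : cd i (v - w) = cd i v - cd i w := by simp [cd, mul_sub]

theorem EE_inj {i j : Idx n} (h : EE i = EE j) : j = i := by
  have := congrArg (cd i) h
  rw [cd_EE, cd_EE] at this
  by_contra e
  simp [e, FormRingData.ne_neg] at this
  split_ifs at this <;> omega

theorem rr_inj {i j k l : Idx n} (h1 : i ≠ j) (h : rr i j = rr k l) :
    (k = i ∧ l = j) ∨ (k = Idx.neg j ∧ l = Idx.neg i) := by
  have hc := congrArg (cd i) h
  simp only [rr, cd_sub, cd_EE] at hc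
  have : k = i ∨ l = Idx.neg i := by
    by_contra! hh
    simp [hh.1, hh.2, FormRingData.ne_neg, h1.symm] at hc
    split_ifs at hc <;> omega
  rcases this with rfl | rfl
  · left
    refine ⟨rfl, ?_⟩
    simp only [rr, sub_right_inj] at h
    exact EE_inj h
  · right
    refine ⟨?_, rfl⟩
    apply EE_inj
    simp only [rr, EE_neg] at *
    have : EE k = - EE j := by
      have := congrArg (fun v => v - EE i) h
      simp at this
      exact this.symm
    exact this.symm

theorem rr_ne_zero {i j : Idx n} (h : i ≠ j) : rr i j ≠ 0 := fun e =>
  h (EE_inj (sub_eq_zero.1 e)).symm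

theorem phi_neg {v : Fin n → ℤ} (h : v ∈ Phi n) : -v ∈ Phi n := by
  obtain ⟨i, j, h, rfl⟩ := h
  rw [rr_neg]; exact rr_mem h.symm

theorem EE_l1 (i : Idx n) : ∑ s, |EE i s| = 1 := by
  rw [Finset.sum_eq_single i.1]
  · simp [EE, eps_abs]
  · intro b _ hb; simp [EE, hb]
  · simp

theorem rr_l1 {i j : Idx n} (h : i ≠ j) : ∑ s, |rr i j s| = 2 := by
  have : ∀ s, |rr i j s| = |EE i s| + |EE j s| := by
    intro s
    by_cases e : i.1 = j.1
    · have : j = Idx.neg i := by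
        obtain ⟨k, s⟩ := i
        obtain ⟨i, t⟩ := j
        simp only at e; subst e
        rcases s with _ | _ <;> rcases t with _ | _ <;> simp [Idx.neg] at *
      subst this
      simp only [rr, EE_neg, Pi.sub_apply, Pi.neg_apply, abs_neg, sub_neg_eq_add]
      rw [← two_mul, ← two_mul, abs_mul]; rfl
    · by_cases e1 : s = i.1
      · have : s ≠ j.1 := fun e' => e (e1.symm.trans e')
        simp [rr, EE, Pi.single_eq_of_ne this]
      · simp [rr, EE, Pi.single_eq_of_ne e1]
  simp only [this, Finset.sum_add_distrib, EE_l1]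
  rfl

theorem phi_l1 {v : Fin n → ℤ} (h : v ∈ Phi n) : ∑ s, |v s| = 2 := by
  obtain ⟨i, j, h, rfl⟩ := h
  exact rr_l1 h

theorem phi_ind : ∀ β ∈ Phi n, ∀ γ ∈ Phi n, γ ≠ β → γ ≠ -β → ∀ i j : ℤ, 0 < i → i • γ + j • β ≠ 0 := by
  intro β hβ γ hγ h1 h2 i j hi e
  have e' : ∀ s, i * γ s = - (j * β s) := fun s => by
    have := congrFun e s
    simp at this
    linarith
  have hs : i * 2 = |j| * 2 := by
    rw [← phi_l1 hγ]
    conv_rhs => rw [phi_l1 hγ, ← phi_l1 hβ]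
    rw [Finset.mul_sum, Finset.mul_sum]
    refine Finset.sum_congr rfl fun s _ => ?_
    rw [← abs_mul, ← abs_neg (j * _), ← e' s, abs_mul, abs_of_pos hi]
  have : j = i ∨ j = -i := by
    have : |j| = i := by linarith
    rcases abs_choice j with h | h <;> rw [h] at this
    · left; exact this
    · right; linarith
  rcases this with rfl | rfl
  · apply h2; funext s
    have := e' s
    have : j * (γ s + β s) = 0 := by linarith
    rcases mul_eq_zero.1 this with h | h
    · omega
    · simp; linarith
  · apply h1; funext s
    have := e' s
    have : i * (γ s - β s) = 0 := by linarith
    rcases mul_eq_zero.1 this with h | h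
    · omega
    · linarith

theorem cd_abs (i : Idx n) (v) : |cd i v| = |v i.1| := by
  rw [cd, abs_mul, eps_abs, one_mul]

theorem phi_three {v : Fin n → ℤ} (h : v ∈ Phi n) {i j k : Idx n} (h1 : i.1 ≠ j.1) (h2 : i.1 ≠ k.1)
    (h3 : j.1 ≠ k.1) : |cd i v| + |cd j v| + |cd k v| ≤ 2 := by
  rw [← phi_l1 h]
  simp only [cd_abs]
  have : ∑ s ∈ ({i.1, j.1, k.1} : Finset (Fin n)), |v s| ≤ ∑ s, |v s| :=
    Finset.sum_le_sum_of_subset_of_nonneg (Finset.subset_univ _) (fun _ _ _ => abs_nonneg _)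
  rw [Finset.sum_insert (by simp [h1, h2]), Finset.sum_insert (by simp [h3]),
    Finset.sum_singleton] at this
  linarith

theorem phi_two {v : Fin n → ℤ} (h : v ∈ Phi n) {i j : Idx n} (h1 : i.1 ≠ j.1) :
    |cd i v| + |cd j v| ≤ 2 := by
  rw [← phi_l1 h]
  simp only [cd_abs]
  have : ∑ s ∈ ({i.1, j.1} : Finset (Fin n)), |v s| ≤ ∑ s, |v s| :=
    Finset.sum_le_sum_of_subset_of_nonneg (Finset.subset_univ _) (fun _ _ _ => abs_nonneg _)
  rw [Finset.sum_insert (by simp [h1]), Finset.sum_singleton] at this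
  linarith

theorem cd_comb (s : Idx n) (a b : ℤ) (v w) : cd s (a • v + b • w) = a * cd s v + b * cd s w := by
  simp [cd]; ring

theorem cd_rr {s i j : Idx n} : cd s (rr i j) = cd s (EE i) - cd s (EE j) := cd_sub _ _ _

theorem cd_self (i : Idx n) : cd i (EE i) = 1 := by
  simp [cd_EE, FormRingData.ne_neg]

theorem cd_ne {i k : Idx n} (h : k.1 ≠ i.1) : cd i (EE k) = 0 := by
  simp [cd, EE, Pi.single_eq_of_ne h.symm]

theorem cd_neg (i : Idx n) (v) : cd i (-v) = - cd i v := by simp [cd]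

/-- short cone -/
theorem cone_short {i j k : Idx n} (h1 : i.1 ≠ j.1) (h2 : i.1 ≠ k.1) (h3 : j.1 ≠ k.1) :
    Cone (Phi n) (rr k j) (rr i j) ⊆ {rr k j, rr k i} := by
  rintro v ⟨hv, a, b, ha, rfl⟩
  have := phi_three hv h1 h2 h3
  simp only [cd_comb, cd_rr, cd_self, cd_ne h1, cd_ne h2, cd_ne h3, cd_ne h1.symm, cd_ne h2.symm,
    cd_ne h3.symm] at this
  have hb : a = 1 ∧ (b = 0 ∨ b = -1) := by
    rcases abs_cases (a * (0 - 0) + b * (1 - 0)) with h | h <;>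
    rcases abs_cases (a * (0 - 1) + b * (0 - 1)) with h' | h' <;>
    rcases abs_cases (a * (1 - 0) + b * (0 - 0)) with h'' | h'' <;> omega
  obtain ⟨rfl, rfl | rfl⟩ := hb
  · left; simp
  · right; simp [rr]

/-- long cone -/
theorem cone_long {i k : Idx n} (h1 : i.1 ≠ k.1) :
    Cone (Phi n) (rr i k) (rr i (Idx.neg i)) ⊆ {rr i k, rr (Idx.neg i) k, rr (Idx.neg k) k} := by
  rintro v ⟨hv, a, b, ha, rfl⟩
  have := phi_two hv h1
  simp only [cd_comb, cd_rr, cd_self, cd_ne h1, cd_ne h1.symm, EE_neg, cd_neg] at this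
  have hb : (a = 1 ∧ (b = 0 ∨ b = -1)) ∨ (a = 2 ∧ b = -1) := by
    rcases abs_cases (a * (1 - 0) + b * (1 - -1)) with h | h <;>
    rcases abs_cases (a * (0 - 1) + b * (0 - -0)) with h' | h' <;> omega
  obtain ⟨rfl, rfl | rfl⟩ | ⟨rfl, rfl⟩ := hb
  · left; simp
  · right; left; simp [rr, EE_neg]; abel
  · right; right; simp [rr, EE_neg, two_smul]; abel

theorem cone_long' {i k : Idx n} (h1 : i.1 ≠ k.1) :
    Cone (Phi n) (rr k (Idx.neg k)) (rr i (Idx.neg i)) ⊆ {rr k (Idx.neg k)} := by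
  rintro v ⟨hv, a, b, ha, rfl⟩
  have := phi_two hv h1
  simp only [cd_comb, cd_rr, cd_self, cd_ne h1, cd_ne h1.symm, EE_neg, cd_neg] at this
  have hb : a = 1 ∧ b = 0 := by
    rcases abs_cases (a * (0 - -0) + b * (1 - -1)) with h | h <;>
    rcases abs_cases (a * (1 - -1) + b * (0 - -0)) with h' | h' <;> omega
  obtain ⟨rfl, rfl⟩ := hb
  simp

theorem ne_of_fst {i j : Idx n} (h : i.1 ≠ j.1) : i ≠ j ∧ i ≠ Idx.neg j :=
  ⟨fun e => h (by rw [e]), fun e => h (by rw [e]; rfl)⟩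

theorem fst_ne {i j : Idx n} (h : i ≠ j) (h' : i ≠ Idx.neg j) : i.1 ≠ j.1 := by
  intro e
  obtain ⟨k, s⟩ := i
  obtain ⟨i, t⟩ := j
  simp only at e; subst e
  rcases s with _ | _ <;> rcases t with _ | _ <;> simp [Idx.neg] at *

theorem exists_third (hn : 3 ≤ n) (i j : Idx n) : ∃ k : Idx n, i.1 ≠ k.1 ∧ j.1 ≠ k.1 := by
  have : ∃ s : Fin n, s ∉ ({i.1, j.1} : Finset (Fin n)) := by
    by_contra! h
    have : (Finset.univ : Finset (Fin n)) ⊆ {i.1, j.1} := fun s _ => h s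
    have h1 := Finset.card_le_card this
    have h2 : ({i.1, j.1} : Finset (Fin n)).card ≤ 2 := Finset.card_le_two
    simp at h1
    omega
  obtain ⟨s, hs⟩ := this
  simp at hs
  exact ⟨(s, true), fun e => hs.1 e.symm, fun e => hs.2 e.symm⟩

end roots

section XGs

variable {A : Type*} [Ring A] {D : FormRingData A} {n : ℕ} {G : Type*} [Group G]
  {T : Idx n → Idx n → A → G}

/-- root subgroups of level `F` -/
def XG (T : Idx n → Idx n → A → G) (F : FormIdeal D) (v : Fin n → ℤ) : Subgroup G :=
  Subgroup.closure {g | ∃ i j a, i ≠ j ∧ rr i j = v ∧ F.pm i j a ∧ g = T i j a}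

theorem XG_mem {F : FormIdeal D} {i j : Idx n} (h : i ≠ j) {a : A} (ha : F.pm i j a) :
    T i j a ∈ XG T F (rr i j) := Subgroup.subset_closure ⟨i, j, a, h, rfl, ha, rfl⟩

theorem XG_mem' {F : FormIdeal D} {i j : Idx n} (h : i ≠ j) {a : A} (ha : F.pm i j a) {v}
    (e : v = rr i j) : T i j a ∈ XG T F v := e ▸ XG_mem h ha

theorem XG_mono {F F' : FormIdeal D} (h : F.I ≤ F'.I) (h' : F.Gamma ≤ F'.Gamma) (v) :
    XG T F v ≤ XG T F' v := by
  refine Subgroup.closure_mono ?_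
  rintro _ ⟨i, j, a, h1, h2, h3, rfl⟩
  exact ⟨i, j, a, h1, h2, pmem_mono h h' h3, rfl⟩

namespace UG

theorem zero (U : UG D n G T) {i j : Idx n} (h : i ≠ j) : T i j 0 = 1 := by
  have := U.add h (a := 0) (b := 0) pmem_zero pmem_zero
  rw [add_zero] at this
  exact left_eq_mul.1 this

theorem neg (U : UG D n G T) {i j : Idx n} (h : i ≠ j) {a : A} (ha : (FTop D).pm i j a) :
    T i j (-a) = (T i j a)⁻¹ := by
  have := U.add h ha (pmem_neg ha)
  rw [add_neg_cancel, U.zero h] at this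
  exact (inv_eq_of_mul_eq_one_right this.symm).symm

theorem mem_XG (U : UG D n G T) {F : FormIdeal D} {i j : Idx n} (h : i ≠ j) {g : G} :
    g ∈ XG T F (rr i j) ↔ ∃ a, F.pm i j a ∧ g = T i j a := by
  constructor
  · intro hg
    induction hg using Subgroup.closure_induction with
    | mem x hx =>
      obtain ⟨k, l, a, hkl, e, ha, rfl⟩ := hx
      rcases rr_inj hkl e with ⟨rfl, rfl⟩ | ⟨rfl, rfl⟩
      · exact ⟨a, ha, rfl⟩
      · exact ⟨_, F.pm_fl ha, U.flip hkl (F.pm_top ha)⟩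
    | one => exact ⟨0, pmem_zero, (U.zero h).symm⟩
    | mul x y _ _ hx hy =>
      obtain ⟨a, ha, rfl⟩ := hx
      obtain ⟨b, hb, rfl⟩ := hy
      exact ⟨a + b, pmem_add ha hb, (U.add h (F.pm_top ha) (F.pm_top hb)).symm⟩
    | inv x _ hx =>
      obtain ⟨a, ha, rfl⟩ := hx
      exact ⟨-a, pmem_neg ha, (U.neg h (F.pm_top ha)).symm⟩
  · rintro ⟨a, ha, rfl⟩
    exact XG_mem h ha

theorem top (U : UG D n G T) : GenS (XG T (FTop D)) (Phi n) = ⊤ := by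
  refine top_unique (U.gen ▸ (Subgroup.closure_le _).2 ?_)
  rintro _ ⟨i, j, a, h, ha, rfl⟩
  exact le_GenS (rr_mem h) (XG_mem h ha)

theorem abel (U : UG D n G T) : ∀ v ∈ Phi n, ∀ x ∈ XG T (FTop D) v, ∀ y ∈ XG T (FTop D) v,
    Commute x y := by
  rintro _ ⟨i, j, h, rfl⟩ x hx y hy
  obtain ⟨a, ha, rfl⟩ := (U.mem_XG h).1 hx
  obtain ⟨b, hb, rfl⟩ := (U.mem_XG h).1 hy
  change _ * _ = _ * _
  rw [← U.add h ha hb, ← U.add h hb ha, add_comm]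

end UG

theorem NN_comm (Φ : Set (Fin n → ℤ)) (α β) : NN Φ α β = NN Φ β α := by
  ext v
  constructor <;> rintro ⟨h, a, b, ha, hb, e⟩ <;> exact ⟨h, b, a, hb, ha, by rw [e, add_comm]⟩

theorem XG_sym_comm (F F' : FormIdeal D) : XG T (FSym F F') = XG T (FSym F' F) := by
  funext v
  refine le_antisymm (XG_mono (symI_comm _ _).le (symG_comm _ _ _ _).le v)
    (XG_mono (symI_comm _ _).le (symG_comm _ _ _ _).le v)

theorem NN_add {i j l : Idx n} (h : i ≠ l) : rr i l ∈ NN (Phi n) (rr i j) (rr j l) :=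
  ⟨rr_mem h, 1, 1, one_pos, one_pos, by simp [rr_add]⟩

theorem C3_mem (U : UG D n G T) (F F' : FormIdeal D) {i j : Idx n} (h1 : i ≠ j)
    (h2 : i ≠ Idx.neg j) {a b : A} (ha : F.pm i j a) (hb : F'.pm j (Idx.neg j) b) :
    ⁅T i j a, T j (Idx.neg j) b⁆ ∈
      GenS (XG T (FSym F F')) (NN (Phi n) (rr i j) (rr j (Idx.neg j))) := by
  obtain ⟨g, hg, rfl⟩ := pmem_long.1 hb
  have ha' : a ∈ F.I := (pmem_short (neg_ne_of h2)).1 ha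
  rw [U.C3 h1 h2 a g (F'.gamma_le_Lambda hg)]
  have hr : rr i (Idx.neg i) ∈ NN (Phi n) (rr i j) (rr j (Idx.neg j)) :=
    ⟨rr_mem (FormRingData.ne_neg i), 2, 1, two_pos, one_pos, by
      simp [rr, EE_neg, two_smul]; abel⟩
  refine mul_mem (le_GenS (NN_add h2) (XG_mem h2 ?_))
    (le_GenS hr (XG_mem (FormRingData.ne_neg i) (FormIdeal.pm_u _ (symG_mem2 ha' hg))))
  refine FormIdeal.pm_s _ (fun e => h1 (Idx.neg_injective e).symm) ?_
  exact FormIdeal.mul_mem_left (FSym F F') _ _ (symI_mem ha' (F'.gamma_le_I hg))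

theorem CR1 (U : UG D n G T) (F F' : FormIdeal D) {i j l : Idx n} (h1 : i ≠ j) (h2 : j ≠ l)
    (h3 : i ≠ l) {a b : A} (ha : F.pm i j a) (hb : F'.pm j l b) :
    ⁅T i j a, T j l b⁆ ∈ GenS (XG T (FSym F F')) (NN (Phi n) (rr i j) (rr j l)) := by
  by_cases hl : l = Idx.neg j
  · subst hl
    exact C3_mem U F F' h1 h3 ha hb
  by_cases hi : i = Idx.neg j
  · subst hi
    have e : j = Idx.neg (Idx.neg j) := (Idx.neg_neg j).symm
    have hd : D.pmem F.I F.Gamma (Idx.neg j) (Idx.neg (Idx.neg j)) a := by rw [← e]; exact ha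
    have := C3_mem U F' F (i := Idx.neg l) (j := Idx.neg j) (fun e => h2 (Idx.neg_injective e).symm)
      (by rw [← e]; exact fun h => h3 (by rw [← h, Idx.neg_neg])) (F'.pm_fl hb) hd
    rw [← U.flip h2 (F'.pm_top hb), ← e, rr_flip, NN_comm, XG_sym_comm] at this
    exact cm_symm this
  have hil' : j ≠ Idx.neg i := fun e => hi (by rw [e, Idx.neg_neg])
  have hlj' : j ≠ Idx.neg l := fun e => hl (by rw [e, Idx.neg_neg])
  have ha' : a ∈ F.I := (pmem_short hil').1 ha
  have hb' : b ∈ F'.I := (pmem_short hl).1 hb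
  by_cases hli : l = Idx.neg i
  · subst hli
    rw [U.C2 h1 hi]
    refine le_GenS (NN_add h3) (XG_mem h3 ?_)
    obtain ⟨c, hc, e⟩ := D.antisym i (a * b)
    rw [e]
    refine FormIdeal.pm_u _ ((FSym F F').gammaMin_le ((gammaMin_le_iff.1 le_rfl).1 c ?_))
    rcases hc with rfl | rfl
    · exact symI_mem ha' hb'
    · exact neg_mem ((FSym F F').bar_mem _ (symI_mem ha' hb'))
  · rw [U.C1 h1 hi h2 hlj' h3 (fun e => hli (by rw [e, Idx.neg_neg]))]
    exact le_GenS (NN_add h3) (XG_mem h3 (FormIdeal.pm_s _ hli (symI_mem ha' hb')))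

theorem CR (U : UG D n G T) (F F' : FormIdeal D) :
    CommRel (Phi n) (XG T F) (XG T F') (XG T (FSym F F')) := by
  rintro _ ⟨i, j, h, rfl⟩ _ ⟨k, l, h', rfl⟩ hne x hx y hy
  obtain ⟨a, ha, rfl⟩ := (U.mem_XG h).1 hx
  obtain ⟨b, hb, rfl⟩ := (U.mem_XG h').1 hy
  have ni : ∀ {p q : Idx n}, p ≠ q → Idx.neg q ≠ Idx.neg p := fun h e => h (Idx.neg_injective e).symm
  by_cases h1 : j = k
  · subst h1
    refine CR1 U F F' h h' ?_ ha hb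
    rintro rfl
    apply hne; rw [rr_add]; simp [rr]
  by_cases h2 : j = Idx.neg l
  · subst h2
    rw [U.flip h' (F'.pm_top hb), ← rr_flip k l]
    refine CR1 U F F' h (ni h') ?_ ha (F'.pm_fl hb)
    rintro rfl
    apply hne; rw [← rr_flip k l, rr_add]; simp [rr]
  by_cases h3 : k = Idx.neg i
  · subst h3
    rw [U.flip h (F.pm_top ha), ← rr_flip i j]
    refine CR1 U F F' (ni h) h' ?_ (F.pm_fl ha) hb
    rintro rfl
    apply hne; rw [← rr_flip i j, rr_add]; simp [rr]
  by_cases h4 : i = l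
  · subst h4
    rw [U.flip h (F.pm_top ha), ← rr_flip i j, U.flip h' (F'.pm_top hb), ← rr_flip k i]
    refine CR1 U F F' (ni h) (ni h') ?_ (F.pm_fl ha) (F'.pm_fl hb)
    intro e
    exact h1 (Idx.neg_injective e)
  · rw [commutatorElement_eq_one_iff_commute.2
      (U.comm h h' h1 h2 h3 h4 (F.pm_top ha) (F'.pm_top hb))]
    exact one_mem _

theorem GenS_mono' {V : Type*} {X Y : V → Subgroup G} (h : ∀ v, X v ≤ Y v) (S : Set V) :
    GenS X S ≤ GenS Y S := iSup₂_mono fun v _ => h v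

theorem sym_top_le (F : FormIdeal D) : (FSym (FTop D) F).I ≤ F.I ∧
    (FSym (FTop D) F).Gamma ≤ F.Gamma := by
  have h : (FSym (FTop D) F).I ≤ F.I :=
    symI_le (fun a _ b hb => F.mul_mem_left _ _ hb) (fun a _ b hb => F.mul_mem_right _ _ hb)
  refine ⟨h, symG_le ((gammaMin_mono h).trans F.gammaMin_le) ?_ ?_⟩
  · intro b hb g hg
    exact F.gammaMin_le ((gammaMin_le_iff.1 le_rfl).2 b hb g hg)
  · intro b _ g hg
    exact F.gamma_conj b g hg

theorem CRtop (U : UG D n G T) (F : FormIdeal D) :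
    CommRel (Phi n) (XG T (FTop D)) (XG T F) (XG T F) := by
  intro α hα β hβ h x hx y hy
  exact GenS_mono' (XG_mono (sym_top_le F).1 (sym_top_le F).2) _ (CR U (FTop D) F α hα β hβ h x hx y hy)

end XGs

section RGHs

variable {A : Type*} [Ring A] {D : FormRingData A} {n : ℕ} {G : Type*} [Group G]
  {T : Idx n → Idx n → A → G}

theorem sup3 {P Q R : Subgroup G} (h1 : ∀ a ∈ P, ∀ c ∈ R, Commute a c)
    (h2 : ∀ b ∈ Q, ∀ c ∈ R, Commute b c) (h3 : ∀ b ∈ Q, ∀ a ∈ P, ⁅b, a⁆ ∈ R) {w : G}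
    (hw : w ∈ P ⊔ Q ⊔ R) : ∃ a ∈ P, ∃ b ∈ Q, ∃ c ∈ R, w = a * b * c := by
  have key : ∀ b ∈ Q, ∀ a ∈ P, b * a = a * b * ⁅b, a⁆ := by
    intro b hb a ha
    have e : Commute (a * b) ⁅b, a⁆ := (h1 a ha _ (h3 b hb a ha)).mul_left (h2 b hb _ (h3 b hb a ha))
    rw [e.eq, commutatorElement_def]; group
  let H : Subgroup G :=
    { carrier := {w | ∃ a ∈ P, ∃ b ∈ Q, ∃ c ∈ R, w = a * b * c}
      mul_mem' := by
        rintro _ _ ⟨a, ha, b, hb, c, hc, rfl⟩ ⟨a', ha', b', hb', c', hc', rfl⟩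
        refine ⟨a * a', mul_mem ha ha', b * b', mul_mem hb hb', ⁅b, a'⁆ * (c * c'),
          mul_mem (h3 b hb a' ha') (mul_mem hc hc'), ?_⟩
        have e1 := (h1 a' ha' c hc).eq
        have e2 := (h2 b' hb' c hc).eq
        have e3 := (h2 b' hb' _ (h3 b hb a' ha')).eq
        calc a * b * c * (a' * b' * c') = a * b * (c * a') * b' * c' := by group
          _ = a * (b * a') * (c * b') * c' := by rw [← e1]; group
          _ = a * (a' * b * ⁅b, a'⁆) * (b' * c) * c' := by rw [key b hb a' ha', ← e2]
          _ = a * a' * b * (⁅b, a'⁆ * b') * (c * c') := by simp only [mul_assoc]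
          _ = a * a' * (b * b') * (⁅b, a'⁆ * (c * c')) := by rw [← e3]; simp only [mul_assoc]
      one_mem' := ⟨1, one_mem _, 1, one_mem _, 1, one_mem _, by simp⟩
      inv_mem' := by
        rintro _ ⟨a, ha, b, hb, c, hc, rfl⟩
        refine ⟨a⁻¹, inv_mem ha, b⁻¹, inv_mem hb, ⁅b⁻¹, a⁻¹⁆ * c⁻¹,
          mul_mem (h3 _ (inv_mem hb) _ (inv_mem ha)) (inv_mem hc), ?_⟩
        have e1 := ((h1 _ (inv_mem ha) _ (inv_mem hc)).symm).eq
        have e2 := ((h2 _ (inv_mem hb) _ (inv_mem hc)).symm).eq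
        calc (a * b * c)⁻¹ = (c⁻¹ * b⁻¹) * a⁻¹ := by group
          _ = b⁻¹ * (c⁻¹ * a⁻¹) := by rw [e2]; group
          _ = (b⁻¹ * a⁻¹) * c⁻¹ := by rw [e1]; group
          _ = _ := by rw [key _ (inv_mem hb) _ (inv_mem ha)]; simp only [mul_assoc] }
  have : P ⊔ Q ⊔ R ≤ H := by
    refine sup_le (sup_le ?_ ?_) ?_
    · intro x hx; exact ⟨x, hx, 1, one_mem _, 1, one_mem _, by simp⟩
    · intro x hx; exact ⟨1, one_mem _, x, hx, 1, one_mem _, by simp⟩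
    · intro x hx; exact ⟨1, one_mem _, 1, one_mem _, x, hx, by simp⟩
  exact this hw

theorem oth1 {i j k l : Idx n} (h : i ≠ j) (h1 : i.1 ≠ k.1) (h2 : i.1 ≠ l.1) :
    rr i j ∈ Oth (Phi n) (rr k l) := by
  refine ⟨rr_mem h, fun e => ?_, fun e => ?_⟩
  · rcases rr_inj h e with ⟨rfl, _⟩ | ⟨_, rfl⟩
    · exact h1 rfl
    · exact h2 rfl
  · rw [rr_neg] at e
    rcases rr_inj h e with ⟨rfl, _⟩ | ⟨_, rfl⟩
    · exact h2 rfl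
    · exact h1 rfl

theorem oth2 {i j k l : Idx n} (h : i ≠ j) (h1 : j.1 ≠ k.1) (h2 : j.1 ≠ l.1) :
    rr i j ∈ Oth (Phi n) (rr k l) := by
  rw [← rr_flip i j]
  exact oth1 (fun e => h (Idx.neg_injective e).symm) h1 h2

theorem genpr_short (U : UG D n G T) (F : FormIdeal D) {i j k : Idx n} (h1 : i.1 ≠ j.1)
    (h2 : i.1 ≠ k.1) (h3 : j.1 ≠ k.1) :
    GenPr (Phi n) (XG T F) (rr i j) (rr i k) (T k j 1) := by
  intro y hy
  obtain ⟨b, hb, rfl⟩ := (U.mem_XG (ne_of_fst h1).1).1 hy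
  have hb' : b ∈ F.I := (pmem_short (neg_ne_of (ne_of_fst h1).2)).1 hb
  have hk : k ≠ Idx.neg i := (ne_of_fst h2.symm).2
  have hk' : i ≠ k := (ne_of_fst h2).1
  have m1 : F.pm i k b := F.pm_s hk hb'
  refine ⟨T i k (-b), XG_mem hk' (pmem_neg m1), T i k b,
    le_GenS (oth2 hk' h2.symm h3.symm) (XG_mem hk' m1), ?_⟩
  have := U.C1 hk' (ne_of_fst h2).2 (ne_of_fst h3.symm).1 (ne_of_fst h3.symm).2 (ne_of_fst h1).1
    (ne_of_fst h1).2 (-b) 1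
  rw [mul_one, U.neg (ne_of_fst h1).1 (F.pm_top hb), U.neg hk' (F.pm_top m1)] at this
  rw [← inv_inv (T i j b), ← this, U.neg hk' (F.pm_top m1), commutatorElement_def]
  group

theorem genpr_long (U : UG D n G T) (F : FormIdeal D) {i k : Idx n} (h1 : i.1 ≠ k.1) :
    GenPr (Phi n) (XG T F) (rr i (Idx.neg i)) (rr k (Idx.neg k)) (T i k 1) := by
  intro y hy
  have hi := FormRingData.ne_neg i
  have hk := FormRingData.ne_neg k
  obtain ⟨b, hb, rfl⟩ := (U.mem_XG hi).1 hy
  obtain ⟨g, hg, rfl⟩ := pmem_long.1 hb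
  have hik : i ≠ Idx.neg k := (ne_of_fst h1).2
  have hs : F.pm i (Idx.neg k) (D.u k * g) :=
    F.pm_s (fun e => (ne_of_fst h1).1 (Idx.neg_injective e).symm)
      (F.mul_mem_left _ _ (F.gamma_le_I hg))
  have hc := U.comm hik hi hik.symm
    (by rw [Idx.neg_neg]; exact hik.symm) hi hi (F.pm_top hs) (F.pm_top hb)
  have := U.C3 (ne_of_fst h1).1 hik 1 g (F.gamma_le_Lambda hg)
  rw [one_mul, D.bar_one, mul_one, hc.eq] at this
  have o1 : rr k (Idx.neg k) ∈ Oth (Phi n) (rr i (Idx.neg i)) := oth1 hk h1.symm h1.symm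
  have o2 : rr i (Idx.neg k) ∈ Oth (Phi n) (rr i (Idx.neg i)) := oth2 hik h1.symm h1.symm
  have m1 : T k (Idx.neg k) (D.u k * g) ∈ XG T F (rr k (Idx.neg k)) := XG_mem hk (F.pm_u hg)
  have m2 : T i (Idx.neg k) (D.u k * g) ∈ XG T F (rr i (Idx.neg k)) := XG_mem hik hs
  generalize T k (Idx.neg k) (D.u k * g) = t at *
  generalize T i (Idx.neg k) (D.u k * g) = s at *
  generalize T i (Idx.neg i) (D.u i * g) = y at *
  refine ⟨t, m1, t⁻¹ * s⁻¹, mul_mem (inv_mem (le_GenS o1 m1)) (inv_mem (le_GenS o2 m2)), ?_⟩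
  rw [← mul_assoc, ← commutatorElement_def, this, mul_inv_cancel_right]

theorem NN_heis {i k : Idx n} (h1 : i.1 ≠ k.1) :
    NN (Phi n) (rr (Idx.neg i) k) (rr i k) ⊆ {rr (Idx.neg k) k} := by
  rintro v ⟨hv, a, b, ha, hb, rfl⟩
  have := phi_two hv h1
  simp only [cd_comb, cd_rr, cd_self, cd_ne h1, cd_ne h1.symm, EE_neg, cd_neg] at this
  have hb : a = 1 ∧ b = 1 := by
    rcases abs_cases (a * (-1 - 0) + b * (1 - 0)) with h | h <;>
    rcases abs_cases (a * (-0 - 1) + b * (0 - 1)) with h' | h' <;> omega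
  obtain ⟨rfl, rfl⟩ := hb
  simp [rr, EE_neg]; abel

theorem gen_short (U : UG D n G T) (FI FJ : FormIdeal D) {i j k : Idx n} (h1 : i.1 ≠ j.1)
    (h2 : i.1 ≠ k.1) (h3 : j.1 ≠ k.1) :
    ∃ δ ∈ Oth (Phi n) (rr i j), ∃ ε ∈ Oth (Phi n) (rr i j), ∃ x0 ∈ XG T (FTop D) δ,
      GenPr (Phi n) (XG T (FTop D)) (rr i j) ε x0 ∧ GenPr (Phi n) (XG T FI) (rr i j) ε x0 ∧
      GenPr (Phi n) (XG T FJ) (rr i j) ε x0 ∧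
      ∀ σ ∈ Cone (Phi n) ε (rr i j), ∀ w ∈ GenS (XG T (FTop D)) (Cone (Phi n) δ (rr i j)),
        ∃ γ₁ ∈ Oth (Phi n) σ, ∃ γ₂ ∈ Oth (Phi n) σ, ∃ x₁ ∈ XG T (FTop D) γ₁,
          ∃ x₂ ∈ XG T (FTop D) γ₂, ∃ x₃ ∈ XG T (FTop D) (-σ), w = x₁ * x₂ * x₃ := by
  have hik := (ne_of_fst h2).1
  have hki := (ne_of_fst h2.symm).1
  have hkj := (ne_of_fst h3.symm).1
  have hjk := (ne_of_fst h3).1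
  refine ⟨rr k j, oth1 hkj h2.symm h3.symm, rr i k, oth2 hik h2.symm h3.symm, T k j 1,
    XG_mem hkj (FormIdeal.pm_s _ (neg_ne_of (ne_of_fst h3.symm).2) trivial), genpr_short U _ h1 h2 h3,
    genpr_short U _ h1 h2 h3, genpr_short U _ h1 h2 h3, ?_⟩
  intro σ hσ w hw
  have hσ' : σ = rr i k ∨ σ = rr j k := by
    rw [← rr_flip i k, ← rr_flip i j] at hσ
    have := cone_short (i := Idx.neg j) (j := Idx.neg i) (k := Idx.neg k) h1.symm h3 h2 hσ
    rw [rr_flip, rr_flip] at this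
    exact this
  have hcomm : ∀ a ∈ XG T (FTop D) (rr k j), ∀ c ∈ XG T (FTop D) (rr k i), Commute a c := by
    intro a ha c hc
    obtain ⟨a, ha', rfl⟩ := (U.mem_XG hkj).1 ha
    obtain ⟨c, hc', rfl⟩ := (U.mem_XG hki).1 hc
    exact U.comm hkj hki hjk (ne_of_fst h1.symm).2 (FormRingData.ne_neg k) hki ha' hc'
  obtain ⟨x, hx, _, rfl, y, hy, rfl⟩ : ∃ a ∈ XG T (FTop D) (rr k j), ∃ b ∈ (⊥ : Subgroup G),
      ∃ c ∈ XG T (FTop D) (rr k i), w = a * b * c := by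
    refine sup3 hcomm ?_ ?_ ?_
    · rintro _ rfl c _; exact Commute.one_left c
    · rintro _ rfl c _; rw [commutatorElement_one_left]; exact one_mem _
    · refine GenS_le ?_ hw
      intro v hv
      rcases cone_short h1 h2 h3 hv with rfl | rfl
      · exact le_sup_left.trans le_sup_left
      · exact le_sup_right
  rcases hσ' with rfl | rfl
  · refine ⟨rr k j, oth2 hkj h1.symm h3, rr k j, oth2 hkj h1.symm h3, x, hx, 1, one_mem _,
      y, by rwa [rr_neg], rfl⟩
  · refine ⟨rr k i, oth2 hki h1 h2, rr k i, oth2 hki h1 h2, y, hy, 1, one_mem _,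
      x, by rwa [rr_neg], ?_⟩
    rw [mul_one, mul_one]; exact (hcomm x hx y hy).eq

theorem gen_long (U : UG D n G T) (FI FJ : FormIdeal D) {i k : Idx n} (h1 : i.1 ≠ k.1) :
    ∃ δ ∈ Oth (Phi n) (rr i (Idx.neg i)), ∃ ε ∈ Oth (Phi n) (rr i (Idx.neg i)),
      ∃ x0 ∈ XG T (FTop D) δ,
      GenPr (Phi n) (XG T (FTop D)) (rr i (Idx.neg i)) ε x0 ∧
      GenPr (Phi n) (XG T FI) (rr i (Idx.neg i)) ε x0 ∧
      GenPr (Phi n) (XG T FJ) (rr i (Idx.neg i)) ε x0 ∧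
      ∀ σ ∈ Cone (Phi n) ε (rr i (Idx.neg i)),
        ∀ w ∈ GenS (XG T (FTop D)) (Cone (Phi n) δ (rr i (Idx.neg i))),
        ∃ γ₁ ∈ Oth (Phi n) σ, ∃ γ₂ ∈ Oth (Phi n) σ, ∃ x₁ ∈ XG T (FTop D) γ₁,
          ∃ x₂ ∈ XG T (FTop D) γ₂, ∃ x₃ ∈ XG T (FTop D) (-σ), w = x₁ * x₂ * x₃ := by
  have hik := (ne_of_fst h1).1
  have hk := FormRingData.ne_neg k
  have hk2 := (FormRingData.ne_neg k).symm
  have hnik : Idx.neg i ≠ k := (ne_of_fst (i := Idx.neg i) (j := k) h1).1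
  refine ⟨rr i k, oth2 hik h1.symm h1.symm, rr k (Idx.neg k), oth1 hk h1.symm h1.symm, T i k 1,
    XG_mem hik (FormIdeal.pm_s _ (neg_ne_of (ne_of_fst h1).2) trivial), genpr_long U _ h1,
    genpr_long U _ h1, genpr_long U _ h1, ?_⟩
  intro σ hσ w hw
  obtain rfl : σ = rr k (Idx.neg k) := cone_long' h1 hσ
  obtain ⟨x, hx, y, hy, z, hz, rfl⟩ : ∃ a ∈ XG T (FTop D) (rr i k),
      ∃ b ∈ XG T (FTop D) (rr (Idx.neg i) k),
      ∃ c ∈ XG T (FTop D) (rr (Idx.neg k) k), w = a * b * c := by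
    refine sup3 ?_ ?_ ?_ ?_
    · intro a ha c hc
      obtain ⟨a, ha', rfl⟩ := (U.mem_XG hik).1 ha
      obtain ⟨c, hc', rfl⟩ := (U.mem_XG hk2).1 hc
      exact U.comm hik hk2 hk hk (fun e => hik (Idx.neg_injective e).symm) hik ha' hc'
    · intro a ha c hc
      obtain ⟨a, ha', rfl⟩ := (U.mem_XG hnik).1 ha
      obtain ⟨c, hc', rfl⟩ := (U.mem_XG hk2).1 hc
      exact U.comm hnik hk2 hk hk (fun e => hnik (Idx.neg_injective e).symm) hnik ha' hc'
    · intro b hb a ha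
      refine GenS_le ?_ (CRtop U _ _ (rr_mem hnik) _ (rr_mem hik) ?_ b hb a ha)
      · intro v hv
        rw [show v = rr (Idx.neg k) k from NN_heis h1 hv]
      · intro e
        have := congrArg (cd k) e
        simp only [rr, EE_neg] at this
        simp [cd, EE, h1, mul_add, mul_sub, Pi.single_eq_of_ne h1.symm] at this
        have h3 := eps_abs k
        rcases k with ⟨k, _ | _⟩ <;> simp [Idx.eps] at this
    · refine GenS_le ?_ hw
      intro v hv
      rcases cone_long h1 hv with rfl | rfl | rfl
      · exact le_sup_left.trans le_sup_left
      · exact le_sup_right.trans le_sup_left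
      · exact le_sup_right
  exact ⟨rr i k, oth1 hik h1 h1, rr (Idx.neg i) k, oth1 hnik h1 h1, x, hx, y, hy, z,
    by rwa [rr_neg], rfl⟩

theorem mk_RGH (hn : 3 ≤ n) (U : UG D n G T) (FI FJ : FormIdeal D) (L : Subgroup G)
    (hL : GenS (XG T (FSym FI FJ)) (Phi n) ≤ L) :
    RGH (Phi n) (XG T (FTop D)) (XG T FI) (XG T FJ) L where
  neg := fun _ h => phi_neg h
  ind := phi_ind
  AA := CRtop U _
  AI := CRtop U _
  AJ := CRtop U _
  leI := fun v => XG_mono le_top FI.gamma_le_Lambda v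
  IJ := fun α hα β hβ h x hx y hy =>
    hL (GenS_mono NN_subset (CR U FI FJ α hα β hβ h x hx y hy))
  abel := U.abel
  top := U.top
  gen := by
    rintro _ ⟨i, j, h, rfl⟩
    by_cases e : j = Idx.neg i
    · subst e
      obtain ⟨k, hk, _⟩ := exists_third hn i i
      exact gen_long U FI FJ hk
    · obtain ⟨k, hk, hk'⟩ := exists_third hn i j
      exact gen_short U FI FJ (fst_ne h (neg_ne_of e)) hk hk'

end RGHs

section finals

variable {A : Type*} [Ring A] {D : FormRingData A} {n : ℕ} {G : Type*} [Group G]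
  {T : Idx n → Idx n → A → G}

/-- abstract relative elementary group -/
def NCl (T : Idx n → Idx n → A → G) (F : FormIdeal D) : Subgroup G :=
  Subgroup.normalClosure (GenS (XG T F) (Phi n) : Set G)

instance NCl_normal (F : FormIdeal D) : (NCl T F).Normal := Subgroup.normalClosure_normal

theorem NCl_mem {F : FormIdeal D} {i j : Idx n} (h : i ≠ j) {a : A} (ha : F.pm i j a) :
    T i j a ∈ NCl T F :=
  Subgroup.subset_normalClosure (le_GenS (rr_mem h) (XG_mem h ha))

theorem GenXG_le {F : FormIdeal D} {H : Subgroup G}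
    (h : ∀ i j a, i ≠ j → F.pm i j a → T i j a ∈ H) : GenS (XG T F) (Phi n) ≤ H := by
  refine GenS_le fun v _ => (Subgroup.closure_le _).2 ?_
  rintro _ ⟨i, j, a, hij, _, ha, rfl⟩
  exact h i j a hij ha

theorem comm_mem_right {C : Subgroup G} [hC : C.Normal] {x y : G} (h : y ∈ C) : ⁅x, y⁆ ∈ C := by
  rw [commutatorElement_def]
  exact mul_mem (hC.conj_mem y h x) (inv_mem h)

theorem comm_mem_left {C : Subgroup G} [hC : C.Normal] {x y : G} (h : x ∈ C) : ⁅x, y⁆ ∈ C :=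
  cm_symm (comm_mem_right h)

/-- coefficients at a short position lying in `C` -/
def coS (U : UG D n G T) (C : Subgroup G) {i j : Idx n} (h : i.1 ≠ j.1) : AddSubgroup A where
  carrier := {c | T i j c ∈ C}
  add_mem' := by
    intro a b ha hb
    have hj := neg_ne_of (ne_of_fst h).2
    simp only [Set.mem_ofPred_eq] at *
    rw [U.add (ne_of_fst h).1 (FormIdeal.pm_s _ hj trivial) (FormIdeal.pm_s _ hj trivial)]
    exact mul_mem ha hb
  zero_mem' := by
    simp only [Set.mem_ofPred_eq]
    rw [U.zero (ne_of_fst h).1]; exact one_mem _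
  neg_mem' := by
    intro a ha
    simp only [Set.mem_ofPred_eq] at *
    rw [U.neg (ne_of_fst h).1 (FormIdeal.pm_s _ (neg_ne_of (ne_of_fst h).2) trivial)]
    exact inv_mem ha

/-- coefficients at a long position lying in `C` -/
def coL (U : UG D n G T) (C : Subgroup G) (i : Idx n) : AddSubgroup A where
  carrier := {g | g ∈ D.Lambda ∧ T i (Idx.neg i) (D.u i * g) ∈ C}
  add_mem' := by
    rintro a b ⟨ha, ha'⟩ ⟨hb, hb'⟩
    refine ⟨add_mem ha hb, ?_⟩
    rw [mul_add, U.add (FormRingData.ne_neg i) (FormIdeal.pm_u _ ha) (FormIdeal.pm_u _ hb)]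
    exact mul_mem ha' hb'
  zero_mem' := by
    refine ⟨zero_mem _, ?_⟩
    rw [mul_zero, U.zero (FormRingData.ne_neg i)]; exact one_mem _
  neg_mem' := by
    rintro a ⟨ha, ha'⟩
    refine ⟨neg_mem ha, ?_⟩
    rw [mul_neg, U.neg (FormRingData.ne_neg i) (FormIdeal.pm_u _ ha)]
    exact inv_mem ha'

theorem antisym' (i : Idx n) (a : A) : ∃ c, (c = a ∨ c = -(D.bar a)) ∧
    D.u i * (a - D.lam * D.bar a) = c - D.m i (Idx.neg i) * D.bar c := by
  rcases i with ⟨i, _ | _⟩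
  · exact ⟨a, Or.inl rfl, by simp [D.u_eq, D.m_eq, Idx.neg]⟩
  · refine ⟨_, Or.inr rfl, ?_⟩
    simp [D.u_eq, D.m_eq, Idx.neg, D.bar_bar, mul_sub, ← mul_assoc, D.bar_lam]
    abel

theorem sym_in (hn : 3 ≤ n) (U : UG D n G T) (F F' : FormIdeal D) (C : Subgroup G) [hC : C.Normal]
    (h : ∀ x ∈ NCl T F, ∀ y ∈ NCl T F', ⁅x, y⁆ ∈ C) : NCl T (FSym F F') ≤ C := by
  have hs : ∀ {i j : Idx n}, i.1 ≠ j.1 → ∀ {c : A}, c ∈ FormRingData.symI F.I F'.I → T i j c ∈ C := by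
    intro i j hij c hc
    obtain ⟨k, hik, hjk⟩ := exists_third hn i j
    have e := fun a b => U.C1 (ne_of_fst hik).1 (ne_of_fst hik).2 (ne_of_fst hjk.symm).1
      (ne_of_fst hjk.symm).2 (ne_of_fst hij).1 (ne_of_fst hij).2 a b
    have p1 := neg_ne_of (ne_of_fst hik).2
    have p2 := neg_ne_of (ne_of_fst hjk.symm).2
    refine symI_le (K := coS U C hij) ?_ ?_ hc
    · intro a ha b hb
      change T i j _ ∈ C
      rw [← e]
      exact h _ (NCl_mem (ne_of_fst hik).1 (F.pm_s p1 ha)) _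
        (NCl_mem (ne_of_fst hjk.symm).1 (F'.pm_s p2 hb))
    · intro a ha b hb
      change T i j _ ∈ C
      rw [← e]
      exact cm_symm (h _ (NCl_mem (ne_of_fst hjk.symm).1 (F.pm_s p2 ha)) _
        (NCl_mem (ne_of_fst hik).1 (F'.pm_s p1 hb)))
  have hl : ∀ {i k : Idx n}, i.1 ≠ k.1 → ∀ {a g : A}, g ∈ D.Lambda →
      ⁅T i k a, T k (Idx.neg k) (D.u k * g)⁆ ∈ C → a * g ∈ FormRingData.symI F.I F'.I →
      a * g * D.bar a ∈ coL U C i := by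
    intro i k hik a g hg hc hag
    refine ⟨D.lambda_conj _ _ hg, ?_⟩
    rw [U.C3 (ne_of_fst hik).1 (ne_of_fst hik).2 a g hg] at hc
    exact (Subgroup.mul_mem_cancel_left _ (hs (j := Idx.neg k) hik (FSym_left F F' _ _ hag))).1 hc
  have hlong : ∀ i : Idx n, D.symG F.I F.Gamma F'.I F'.Gamma ≤ coL U C i := by
    intro i
    obtain ⟨k, hik, -⟩ := exists_third hn i i
    have p1 := neg_ne_of (ne_of_fst hik).2
    have n1 := (ne_of_fst hik).1
    have nk := FormRingData.ne_neg k
    refine symG_le (gammaMin_le_iff.2 ⟨?_, ?_⟩) ?_ ?_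
    · intro a ha
      refine ⟨D.lambdaMin_mem a, ?_⟩
      obtain ⟨c, hc, e⟩ := antisym' (D := D) i a
      have hc' : c ∈ FormRingData.symI F.I F'.I := by
        rcases hc with rfl | rfl
        · exact ha
        · exact neg_mem (FSym_bar F F' _ ha)
      have := U.C2 n1 (ne_of_fst hik).2 c 1
      rw [mul_one] at this
      rw [e, ← this]
      exact comm_mem_left (hs hik hc')
    · intro a ha c hc
      exact hl hik hc (comm_mem_left (hs hik ha)) (FSym_right F F' _ _ ha)
    · intro b hb g hg
      exact hl hik (F.gamma_le_Lambda hg) (cm_symm (h _ (NCl_mem nk (F.pm_u hg)) _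
        (NCl_mem n1 (F'.pm_s p1 hb)))) (symI_mem' (F.gamma_le_I hg) hb)
    · intro b hb g hg
      exact hl hik (F'.gamma_le_Lambda hg) (h _ (NCl_mem n1 (F.pm_s p1 hb)) _
        (NCl_mem nk (F'.pm_u hg))) (symI_mem hb (F'.gamma_le_I hg))
  refine Subgroup.normalClosure_le_normal (GenXG_le ?_)
  intro i j a hij ha
  by_cases e : j = Idx.neg i
  · subst e
    obtain ⟨g, hg, rfl⟩ := pmem_long.1 ha
    exact (hlong i hg).2
  · exact hs (fst_ne hij (neg_ne_of e)) ((pmem_short e).1 ha)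

theorem all_short (hn : 3 ≤ n) (U : UG D n G T) (F : FormIdeal D) (M : Subgroup G) [hM : M.Normal]
    {j k : Idx n} (hjk : j.1 ≠ k.1) (h : ∀ c ∈ F.I, T j k c ∈ M) :
    ∀ {p q : Idx n}, p.1 ≠ q.1 → ∀ c ∈ F.I, T p q c ∈ M := by
  have col : ∀ {j k l : Idx n}, j.1 ≠ k.1 → j.1 ≠ l.1 → k.1 ≠ l.1 → (∀ c ∈ F.I, T j k c ∈ M) →
      ∀ c ∈ F.I, T j l c ∈ M := by
    intro j k l h1 h2 h3 h c hc
    have := U.C1 (ne_of_fst h1).1 (ne_of_fst h1).2 (ne_of_fst h3).1 (ne_of_fst h3).2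
      (ne_of_fst h2).1 (ne_of_fst h2).2 c 1
    rw [mul_one] at this
    rw [← this]
    exact comm_mem_left (h c hc)
  have col' : ∀ {j k l : Idx n}, j.1 ≠ k.1 → j.1 ≠ l.1 → (∀ c ∈ F.I, T j k c ∈ M) →
      ∀ c ∈ F.I, T j l c ∈ M := by
    intro j k l h1 h2 h
    by_cases h3 : k.1 = l.1
    · obtain ⟨m, hm, hm'⟩ := exists_third hn j k
      exact col hm h2 (h3 ▸ hm'.symm) (col h1 hm hm' h)
    · exact col h1 h2 h3 h
  have flip : ∀ {j k : Idx n}, j.1 ≠ k.1 → (∀ c ∈ F.I, T j k c ∈ M) →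
      ∀ c ∈ F.I, T (Idx.neg k) (Idx.neg j) c ∈ M := by
    intro j k h1 h c hc
    have hp : F.pm (Idx.neg k) (Idx.neg j) c := by
      refine F.pm_s ?_ hc
      rw [Idx.neg_neg]; exact fun e => (ne_of_fst h1.symm).2 e.symm
    rw [U.flip (fun e => h1 (by rw [Idx.neg_injective e])) (F.pm_top hp), Idx.neg_neg, Idx.neg_neg]
    exact h _ (neg_mem (F.mul_mem_left _ _ (F.bar_mem _ hc)))
  have row : ∀ {j k p : Idx n}, j.1 ≠ k.1 → p.1 ≠ k.1 → (∀ c ∈ F.I, T j k c ∈ M) →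
      ∀ c ∈ F.I, T p k c ∈ M := by
    intro j k p h1 h2 h
    have a1 := col' (j := Idx.neg k) (k := Idx.neg j) (l := Idx.neg p) h1.symm h2.symm (flip h1 h)
    have a2 := flip (j := Idx.neg k) (k := Idx.neg p) h2.symm a1
    rwa [Idx.neg_neg, Idx.neg_neg] at a2
  intro p q hpq
  obtain ⟨t, ht, ht'⟩ := exists_third hn j p
  exact col' ht' hpq (row ht ht' (col' hjk ht h))

theorem all_in (hn : 3 ≤ n) (U : UG D n G T) (F : FormIdeal D) (M : Subgroup G) [hM : M.Normal]
    {j k p : Idx n} (hjk : j.1 ≠ k.1) (h : ∀ c ∈ F.I, T j k c ∈ M)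
    (h' : ∀ g ∈ F.Gamma, T p (Idx.neg p) (D.u p * g) ∈ M) :
    GenS (XG T F) (Phi n) ≤ M := by
  have hs := fun {p q : Idx n} => all_short hn U F M hjk h (p := p) (q := q)
  have st : ∀ {p l : Idx n}, l.1 ≠ p.1 → (∀ g ∈ F.Gamma, T p (Idx.neg p) (D.u p * g) ∈ M) →
      (∀ g ∈ F.Gamma, T l (Idx.neg l) (D.u l * g) ∈ M) := by
    intro p l hlp h g hg
    have := U.C3 (ne_of_fst hlp).1 (ne_of_fst hlp).2 1 g (F.gamma_le_Lambda hg)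
    rw [one_mul, D.bar_one, mul_one] at this
    have h2 : T l (Idx.neg p) (D.u p * g) * T l (Idx.neg l) (D.u l * g) ∈ M := by
      rw [← this]; exact comm_mem_right (h g hg)
    exact (Subgroup.mul_mem_cancel_left _ (hs (q := Idx.neg p) hlp _
      (F.mul_mem_left _ _ (F.gamma_le_I hg)))).1 h2
  refine GenXG_le ?_
  intro i j a hij ha
  by_cases e : j = Idx.neg i
  · subst e
    obtain ⟨g, hg, rfl⟩ := pmem_long.1 ha
    obtain ⟨m, hm, hm'⟩ := exists_third hn i p
    exact st hm (st hm'.symm h') g hg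
  · exact hs (fst_ne hij (neg_ne_of e)) _ ((pmem_short e).1 ha)

theorem comm_far (U : UG D n G T) (F F' : FormIdeal D) {i j k l : Idx n} (h1 : i ≠ j) (h2 : k ≠ l)
    (h3 : i.1 ≠ k.1) (h4 : i.1 ≠ l.1) (h5 : j.1 ≠ k.1) (h6 : j.1 ≠ l.1) {a b : A}
    (ha : F.pm i j a) (hb : F'.pm k l b) : Commute (T i j a) (T k l b) :=
  U.comm h1 h2 (ne_of_fst h5).1 (ne_of_fst h6).2 (ne_of_fst h3.symm).2 (ne_of_fst h4).1
    (F.pm_top ha) (F'.pm_top hb)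

theorem comm_of_commute {N : Subgroup G} {x y t : G} (h1 : Commute x t) (h2 : Commute y t) :
    ⁅⁅x, y⁆, t⁆ ∈ N := by
  have : Commute ⁅x, y⁆ t := by
    rw [commutatorElement_def]
    exact ((h1.mul_left h2).mul_left h1.inv_left).mul_left h2.inv_left
  rw [commutatorElement_eq_one_iff_commute.2 this]
  exact one_mem _

theorem quo_aux {Q : Type*} [Group Q] {x y t p : Q} (h0 : ⁅x, t⁆ = p) (h1 : Commute y t)
    (h2 : Commute x p) (h3 : Commute y p) : Commute ⁅x, y⁆ t := by
  have e : x * t = p * t * x := by rw [← h0, commutatorElement_def]; group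
  have s1 : SemiconjBy x (p⁻¹ * t) t := by
    change x * (p⁻¹ * t) = t * x
    rw [← mul_assoc, (h2.inv_right).eq, mul_assoc, e]; group
  have s2 : SemiconjBy y (p⁻¹ * t) (p⁻¹ * t) := (h3.inv_right).mul_right h1
  have s3 : SemiconjBy x⁻¹ t (p⁻¹ * t) := s1.inv_symm_left
  have s4 : SemiconjBy y⁻¹ t t := h1.inv_left
  rw [commutatorElement_def]
  exact ((s1.mul_left s2).mul_left s3).mul_left s4

theorem quo {N : Subgroup G} [N.Normal] {x y t : G} (h1 : ⁅y, t⁆ ∈ N) (h2 : ⁅x, ⁅x, t⁆⁆ ∈ N)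
    (h3 : ⁅y, ⁅x, t⁆⁆ ∈ N) : ⁅⁅x, y⁆, t⁆ ∈ N := by
  rw [cm_iff] at *
  exact quo_aux rfl h1 h2 h3

theorem main_abs (hn : 3 ≤ n) (U : UG D n G T) (FI FJ FK : FormIdeal D) :
    ⁅⁅NCl T FI, NCl T FJ⁆, NCl T FK⁆ = ⁅NCl T (FSym FI FJ), NCl T FK⁆ := by
  have hLPQ : NCl T (FSym FI FJ) ≤ ⁅NCl T FI, NCl T FJ⁆ :=
    sym_in hn U FI FJ _ fun x hx y hy => Subgroup.commutator_mem_commutator hx hy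
  refine le_antisymm ?_ (Subgroup.commutator_mono hLPQ le_rfl)
  have H := mk_RGH hn U FI FJ (NCl T (FSym FI FJ)) Subgroup.subset_normalClosure
  set L := NCl T (FSym FI FJ) with hL
  set R := NCl T FK with hR
  have hN : (⁅L, R⁆ : Subgroup G).Normal := inferInstance
  rw [Subgroup.commutator_le]
  intro z hz x hx
  have hz' : z ∈ Ytil (Phi n) (XG T FI) (XG T FJ) L := by
    refine (Subgroup.commutator_le.2 ?_ : ⁅NCl T FI, NCl T FJ⁆ ≤ _) hz
    intro p hp q hq
    exact H.main hp hq
  have hle : Ytil (Phi n) (XG T FI) (XG T FJ) L ≤ CM ⁅L, R⁆ x := by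
    refine (Subgroup.closure_le _).2 ?_
    rintro z hz0
    change ⁅z, x⁆ ∈ ⁅L, R⁆
    have hzY : z ∈ Ytil (Phi n) (XG T FI) (XG T FJ) L := Subgroup.subset_closure hz0
    rcases hz0 with hz1 | ⟨β, hβ, x', hx', y', hy', rfl⟩
    · exact Subgroup.commutator_mem_commutator hz1 hx
    refine triple_abs (L := L) (R := R) (N := ⁅L, R⁆) (S := GenS (XG T FK) (Phi n)) rfl le_rfl
      (fun g => H.Ytil_central hzY g) ?_ hx
    intro M hM hMx
    obtain ⟨i, j, hij, rfl⟩ := hβ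
    obtain ⟨a, ha, rfl⟩ := (U.mem_XG hij).1 hx'
    rw [rr_neg] at hy'
    obtain ⟨b, hb, rfl⟩ := (U.mem_XG hij.symm).1 hy'
    by_cases e : j = Idx.neg i
    · subst e
      obtain ⟨k, hk, -⟩ := exists_third hn i i
      obtain ⟨l, hl, hkl⟩ := exists_third hn i k
      refine all_in hn U FK M (j := k) (k := l) (p := k) hkl ?_ ?_
      · intro c hc
        have hp : FK.pm k l c := FK.pm_s (neg_ne_of (ne_of_fst hkl).2) hc
        refine hMx _ (NCl_mem (ne_of_fst hkl).1 hp) (comm_of_commute ?_ ?_)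
        · exact comm_far U FI FK hij (ne_of_fst hkl).1 hk hl hk hl ha hp
        · exact comm_far U FJ FK hij.symm (ne_of_fst hkl).1 hk hl hk hl hb hp
      · intro g hg
        have nk := FormRingData.ne_neg k
        refine hMx _ (NCl_mem nk (FK.pm_u hg)) (comm_of_commute ?_ ?_)
        · exact comm_far U FI FK hij nk hk hk hk hk ha (FK.pm_u hg)
        · exact comm_far U FJ FK hij.symm nk hk hk hk hk hb (FK.pm_u hg)
    · obtain ⟨k, hik, hjk⟩ := exists_third hn i j
      have h1 := fst_ne hij (neg_ne_of e)
      have nji := (ne_of_fst h1.symm)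
      have nik := (ne_of_fst hik)
      have njk := (ne_of_fst hjk)
      have ha' : a ∈ FI.I := (pmem_short e).1 ha
      have hb' : b ∈ FJ.I := (pmem_short (neg_ne_of nji.2)).1 hb
      refine all_in hn U FK M (j := j) (k := k) (p := k) hjk ?_ ?_
      · intro c hc
        have hp : FK.pm j k c := FK.pm_s (neg_ne_of njk.2) hc
        have hq : (FTop D).pm i k (a * c) := FormIdeal.pm_s _ (neg_ne_of nik.2) trivial
        refine hMx _ (NCl_mem njk.1 hp) (quo ?_ ?_ ?_)
        · rw [commutatorElement_eq_one_iff_commute.2]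
          · exact one_mem _
          · exact U.comm nji.1 njk.1 hij nik.2 (FormRingData.ne_neg j) njk.1 (FJ.pm_top hb)
              (FK.pm_top hp)
        · rw [U.C1 hij (ne_of_fst h1).2 njk.1 njk.2 nik.1 nik.2, commutatorElement_eq_one_iff_commute.2]
          · exact one_mem _
          · exact U.comm hij nik.1 hij.symm njk.2 (FormRingData.ne_neg i) nik.1 (FI.pm_top ha) hq
        · rw [U.C1 hij (ne_of_fst h1).2 njk.1 njk.2 nik.1 nik.2,
            U.C1 nji.1 nji.2 nik.1 nik.2 njk.1 njk.2, ← mul_assoc,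
            ← U.C1 nji.1 nji.2 nik.1 nik.2 njk.1 njk.2]
          exact Subgroup.commutator_mem_commutator
            (NCl_mem nji.1 (FormIdeal.pm_s (FSym FI FJ) (neg_ne_of nji.2) (symI_mem' ha' hb')))
            (NCl_mem nik.1 (FK.pm_s (neg_ne_of nik.2) hc))
      · intro g hg
        have nk := FormRingData.ne_neg k
        refine hMx _ (NCl_mem nk (FK.pm_u hg)) (comm_of_commute ?_ ?_)
        · exact comm_far U FI FK hij nk hik hik hjk hjk ha (FK.pm_u hg)
        · exact comm_far U FJ FK hij.symm nk hjk hjk hik hik hb (FK.pm_u hg)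
  exact hle hz'

theorem map_NCl (F : FormIdeal D) :
    (NCl (TE D n) F).map (D.EUmax n).subtype = D.EU n F.I F.Gamma := by
  have e1 : NCl (TE D n) F = Subgroup.normalClosure
      {x | ∃ i j a, i ≠ j ∧ F.pm i j a ∧ x = TE D n i j a} := by
    refine le_antisymm (Subgroup.normalClosure_le_normal (GenXG_le ?_))
      (Subgroup.normalClosure_le_normal ?_)
    · intro i j a h ha
      exact Subgroup.subset_normalClosure ⟨i, j, a, h, ha, rfl⟩
    · rintro _ ⟨i, j, a, h, ha, rfl⟩
      exact NCl_mem h ha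
  rw [e1, Subgroup.normalClosure, MonoidHom.map_closure, FormRingData.EU]
  congr 1
  ext x
  rw [transvGen_eq]
  constructor
  · rintro ⟨y, hy, rfl⟩
    obtain ⟨_, ⟨i, j, a, h, ha, rfl⟩, hc⟩ := Group.mem_conjugatesOfSet_iff.1 hy
    obtain ⟨g, rfl⟩ := isConj_iff.1 hc
    exact ⟨g, g.2, _, ⟨i, j, a, h, ha, rfl⟩, by simp [TE_val h (F.pm_top ha)]⟩
  · rintro ⟨g, hg, _, ⟨i, j, a, h, ha, rfl⟩, rfl⟩
    refine ⟨⟨g, hg⟩ * TE D n i j a * ⟨g, hg⟩⁻¹, ?_, by simp [TE_val h (F.pm_top ha)]⟩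
    exact Group.mem_conjugatesOfSet_iff.2 ⟨_, ⟨i, j, a, h, ha, rfl⟩, isConj_iff.2 ⟨_, rfl⟩⟩

end finals

/-- Lemma 14 (triple commutators):
`[[EU(2n,I,Γ), EU(2n,J,Δ)], EU(2n,K,Θ)] = [EU(2n,(I,Γ)∘(J,Δ)), EU(2n,K,Θ)]`. -/
theorem statement17 {A : Type*} [Ring A] (D : FormRingData A) (n : ℕ) (hn : 3 ≤ n)
    (FI FJ FK : FormIdeal D) :
    ⁅⁅D.EU n FI.I FI.Gamma, D.EU n FJ.I FJ.Gamma⁆, D.EU n FK.I FK.Gamma⁆ =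
      ⁅D.EUsym n FI.I FI.Gamma FJ.I FJ.Gamma, D.EU n FK.I FK.Gamma⁆ := by
  have h := congrArg (Subgroup.map (D.EUmax n).subtype) (main_abs hn (UG_TE (D := D)) FI FJ FK)
  simp only [Subgroup.map_commutator, map_NCl] at h
  exact h
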